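/- arXiv:math/9902109 — 4 statements merged into one kernel-verified Lean document; each statement's English description precedes it below -/
import Mathlib

section
/- For every partition λ = (λ₁ ≥ … ≥ λ_l ≥ 0), the dual vertex operator components applied to the vacuum give, up to sign, the Schur function of the conjugate partition: S*_{λ₁} S*_{λ₂} ⋯ S*_{λ_l}(1) = (−1)^{|λ|} s_{λ'} = (−1)^{|λ|} det(h_{λ'_i−i+j})_{1≤i,j≤λ₁}, where |λ| = λ₁+…+λ_l and λ' is the conjugate partition. Equivalently, S*_{λ₁} ⋯ S*_{λ_l}(1) = (−1)^{|λ|} det(e_{λ_i−i+j})_{1≤i,j≤l}. -/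
/-!
Two facts give the theorem.

* **The `e`-determinant.** By Taylor's formula, `h_j(∂) P` is the coefficient of `z^j` in
  `Φ(P) = P(p₁ + z, p₂ + z², …)` (`Dop_hh`), and `Φ` is a ring homomorphism with
  `Φ(e_k) = e_k + z e_{k-1}` (`shiftHom_eZ`). Hence `Φ` turns `det (e_{μ_i - i + j})` into a
  determinant whose columns are `v_{j+1} + z v_j`, and the coefficients of its expansion in `z` are
  the maximal minors of the array `(v_0, …, v_l)` (`det_consecutive`). So `S*_n` applied to that
  determinant is, up to `(-1)^n`, the Laplace expansion along the first row of the determinant for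
  `(n, μ)` (`SstarOp_schurE`); induct on the number of rows.

* **The `h`-determinant.** From `H(t) E(-t) = 1` the Toeplitz matrices `(h_{a-b})` and
  `((-1)^{a-b} e_{a-b})` are mutually inverse. The boundary path of `λ` inside an `l × m` rectangle
  splits the `m + l` indices into two sets for which Jacobi's complementary minors are the two
  determinants, and the permutation involved has the boxes of `λ` as its inversions
  (`sign_mayaPerm`), which matches the signs carried by the `e_k` (`schur_conjPart_eq_schurE`).
-/

open MvPolynomial

noncomputable section

/-- The ring of symmetric functions `Λ = ℚ[p₁,p₂,…]`, with the variable `X n`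
(for `n : ℕ+`) playing the role of the power sum `p_n`. -/
abbrev Lam : Type := MvPolynomial ℕ+ ℚ

/-- The power sum `p_n`. -/
def pp (n : ℕ+) : Lam := X n

/-- The family `g` with generating function `∑_k g_k t^k = exp (∑_{n≥1} c n · p_n tⁿ / n)`,
characterized by `g 0 = 1` together with the recursion obtained by differentiating the
generating function:  `(k+1) · g (k+1) = ∑_{i=0}^{k} c (i+1) · p_{i+1} · g (k-i)`. -/
def genFam (c : ℕ → ℚ) : ℕ → Lam
  | 0 => 1
  | (k+1) => (((k : ℚ) + 1)⁻¹) •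
      ∑ i ∈ Finset.range (k+1), c (i+1) • (pp ⟨i+1, Nat.succ_pos i⟩ * genFam c (k - i))
  decreasing_by exact Nat.lt_succ_of_le (Nat.sub_le k i)

/-- The complete homogeneous symmetric function `h_k`,
with generating function `exp (∑ p_n tⁿ/n)`. -/
def hh : ℕ → Lam := genFam fun _ => 1

/-- The elementary symmetric function `e_k`,
with generating function `exp (∑ (−1)^{n−1} p_n tⁿ/n)`. -/
def ee : ℕ → Lam := genFam fun n => (-1)^(n+1)

/-- `h` indexed by `ℤ` (zero for negative indices). -/
def hZ (n : ℤ) : Lam := if 0 ≤ n then hh n.toNat else 0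

/-- `e` indexed by `ℤ` (zero for negative indices). -/
def eZ (n : ℤ) : Lam := if 0 ≤ n then ee n.toNat else 0

/-- The differential operator `∏_i (i·∂/∂p_i)^(α i)` (the factors commute,
so the sorted product is the canonical one). -/
def monOp (α : ℕ+ →₀ ℕ) : Module.End ℚ Lam :=
  ((α.support.sort (· ≤ ·)).map fun (i : ℕ+) => (((i : ℕ) : ℚ) • (pderiv i).toLinearMap) ^ (α i)).prod

/-- `f(∂) P`: substitute `p_i ↦ i·∂/∂p_i` in `f` and apply the result to `P`. -/
def Dop (f : Lam) (P : Lam) : Lam := ∑ α ∈ f.support, f.coeff α • monOp α P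

/-- A bound for the weighted degree (`p_i` of weight `i`) of `P`;
`e_j(∂) P = 0 = h_j(∂) P` whenever `j > wbound P`. -/
def wbound (P : Lam) : ℕ := P.support.sup fun α => α.sum fun i k => (i : ℕ) * k

/-- The vertex operator component `S_n = ∑_{j ≥ max(0,n)} (−1)^j h_{j−n} · e_j(∂)`;
on a given polynomial only the (finitely many) terms with `j ≤ wbound P` act nontrivially. -/
def Sop (n : ℤ) (P : Lam) : Lam :=
  ∑ j ∈ Finset.range (wbound P + 1),
    if n ≤ (j : ℤ) then ((-1 : ℚ)) ^ j • (hZ ((j : ℤ) - n) * Dop (ee j) P) else 0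

/-- The dual vertex operator component `S*_n = ∑_{j ≥ max(0,−n)} (−1)^{j+n} e_{j+n} · h_j(∂)`. -/
def SstarOp (n : ℤ) (P : Lam) : Lam :=
  ∑ j ∈ Finset.range (wbound P + 1),
    if -n ≤ (j : ℤ) then ((-1 : ℚ)) ^ ((j : ℤ) + n) • (eZ ((j : ℤ) + n) * Dop (hh j) P) else 0

/-- The Schur function of an arbitrary integer tuple, via the Jacobi–Trudi determinant
`s_ρ = det (h_{ρ_i − i + j})`. -/
def schur {l : ℕ} (ρ : Fin l → ℤ) : Lam :=
  (Matrix.of fun i j : Fin l => hZ (ρ i - (i.1 : ℤ) + (j.1 : ℤ))).det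

/-- The dual Schur function of an integer tuple, `s_{ρ'} = det (e_{ρ_i − i + j})`. -/
def schurE {l : ℕ} (ρ : Fin l → ℤ) : Lam :=
  (Matrix.of fun i j : Fin l => eZ (ρ i - (i.1 : ℤ) + (j.1 : ℤ))).det


/-! ### Generating series -/

/-- The generating series `∑_k g_k t^k` of `genFam c`. -/
def genSer (c : ℕ → ℚ) : PowerSeries Lam := PowerSeries.mk (genFam c)

/-- The logarithmic derivative `∑_i c (i+1) p_{i+1} t^i` of `genSer c`. -/
def logDer (c : ℕ → ℚ) : PowerSeries Lam :=
  PowerSeries.mk fun i => c (i + 1) • pp i.succPNat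

lemma genFam_zero (c : ℕ → ℚ) : genFam c 0 = 1 := by
  rw [genFam]

lemma genFam_succ (c : ℕ → ℚ) (k : ℕ) :
    ((k : ℚ) + 1) • genFam c (k + 1) =
      ∑ i ∈ Finset.range (k + 1), c (i + 1) • (pp i.succPNat * genFam c (k - i)) := by
  rw [genFam, smul_smul, mul_inv_cancel₀ (by positivity), one_smul]
  rfl

lemma derivative_genSer (c : ℕ → ℚ) :
    PowerSeries.derivative Lam (genSer c) = logDer c * genSer c := by
  ext1 k
  rw [PowerSeries.coeff_derivative, PowerSeries.coeff_mul,
    Finset.Nat.sum_antidiagonal_eq_sum_range_succ_mk]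
  have h := genFam_succ c k
  simp only [genSer, logDer, PowerSeries.coeff_mk, smul_mul_assoc]
  rw [← h, Algebra.smul_def, mul_comm]
  simp

lemma derivative_mul' {R : Type*} [CommRing R] (F G : PowerSeries R) :
    PowerSeries.derivative R (F * G) =
      F * PowerSeries.derivative R G + G * PowerSeries.derivative R F := by
  rw [Derivation.leibniz, smul_eq_mul, smul_eq_mul]

/-- A formal linear differential equation `F' = D F` has at most one solution with given
constant term, in characteristic zero. -/
lemma ode_unique {R : Type*} [CommRing R] [Algebra ℚ R] {D F G : PowerSeries R}
    (hF : PowerSeries.derivative R F = D * F) (hG : PowerSeries.derivative R G = D * G)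
    (h0 : PowerSeries.coeff 0 F = PowerSeries.coeff 0 G) : F = G := by
  ext1 n
  induction n using Nat.strong_induction_on with
  | _ n ih =>
    cases n with
    | zero => exact h0
    | succ k =>
      have e : PowerSeries.coeff (k + 1) F * ((k : R) + 1)
          = PowerSeries.coeff (k + 1) G * ((k : R) + 1) := by
        rw [← PowerSeries.coeff_derivative, ← PowerSeries.coeff_derivative, hF, hG,
          PowerSeries.coeff_mul, PowerSeries.coeff_mul]
        refine Finset.sum_congr rfl fun x hx => ?_
        rw [ih x.2 (by have := Finset.HasAntidiagonal.mem_antidiagonal.1 hx; omega)]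
      have u : IsUnit ((k : R) + 1) := by
        have := (IsUnit.mk0 ((k : ℚ) + 1) (by positivity)).map (algebraMap ℚ R)
        simpa using this
      exact u.mul_right_cancel e

/-- `(-1)^k e_k` is the family attached to the constant weight `-1`. -/
lemma neg_one_pow_smul_ee (k : ℕ) : ((-1 : ℚ)) ^ k • ee k = genFam (fun _ => -1) k := by
  induction k using Nat.strong_induction_on with
  | _ k ih =>
    cases k with
    | zero => simp [ee, genFam_zero]
    | succ k =>
      have hk : ((k : ℚ) + 1) ≠ 0 := by positivity
      apply smul_right_injective Lam hk
      change ((k : ℚ) + 1) • _ = ((k : ℚ) + 1) • _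
      rw [genFam_succ, smul_comm, ee, genFam_succ, Finset.smul_sum]
      refine Finset.sum_congr rfl fun i hi => ?_
      have hi' : i ≤ k := Nat.lt_succ_iff.1 (Finset.mem_range.1 hi)
      rw [← ih (k - i) (by omega), ee, mul_smul_comm, smul_smul, smul_smul]
      congr 1
      obtain ⟨m, rfl⟩ := Nat.exists_eq_add_of_le hi'
      have h1 : ((-1 : ℚ)) ^ i * (-1) ^ i = 1 := by
        rw [← mul_pow]; simp
      rw [Nat.add_sub_cancel_left]
      linear_combination (-(-1 : ℚ) ^ m) * h1

/-- `H(t) E(-t) = 1`. -/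
lemma genSer_mul_genSer_neg : genSer (fun _ => 1) * genSer (fun _ => -1) = 1 := by
  have hl : logDer (fun _ => -1) = - logDer (fun _ => 1) := by
    ext1 k
    simp [logDer]
  refine ode_unique (D := 0) ?_ ?_ ?_
  · rw [derivative_mul', derivative_genSer, derivative_genSer, hl]
    ring
  · simp
  · simp [genSer, PowerSeries.coeff_mul, genFam_zero]

/-! ### The shift homomorphism -/

/-- The algebra homomorphism `p_n ↦ p_n + z^n`, i.e. Taylor expansion along `(z, z², z³, …)`;
its `z^j`-coefficient is the operator `h_j(∂)`. -/
def shiftHom : Lam →ₐ[ℚ] Polynomial Lam :=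
  aeval fun n : ℕ+ => Polynomial.C (X n) + Polynomial.X ^ (n : ℕ)

lemma shiftHom_X (n : ℕ+) :
    shiftHom (X n) = Polynomial.C (X n) + Polynomial.X ^ (n : ℕ) := by
  simp [shiftHom]

lemma shiftHom_pp (n : ℕ+) :
    shiftHom (pp n) = Polynomial.C (pp n) + Polynomial.X ^ (n : ℕ) :=
  shiftHom_X n

lemma map_genSer_ee :
    PowerSeries.map (shiftHom : Lam →+* Polynomial Lam) (genSer fun n => (-1) ^ (n + 1)) =
      PowerSeries.map Polynomial.C (genSer fun n => (-1) ^ (n + 1)) *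
        (1 + PowerSeries.C Polynomial.X * PowerSeries.X) := by
  set c : ℕ → ℚ := fun n => (-1) ^ (n + 1) with hc
  set Z : PowerSeries (Polynomial Lam) := PowerSeries.mk fun i => (-1) ^ i * Polynomial.X ^ (i + 1)
    with hZ
  have hZ1 : Z * (1 + PowerSeries.C Polynomial.X * PowerSeries.X) = PowerSeries.C Polynomial.X := by
    ext1 k
    rw [mul_add, mul_one, mul_comm (PowerSeries.C _), ← mul_assoc, map_add,
      PowerSeries.coeff_mul_C]
    cases k with
    | zero => simp [hZ]
    | succ k =>
      rw [PowerSeries.coeff_succ_mul_X, PowerSeries.coeff_C]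
      simp [hZ]
      ring
  have hd : ∀ (f : Lam →+* Polynomial Lam) (F : PowerSeries Lam),
      PowerSeries.derivative _ (PowerSeries.map f F) =
        PowerSeries.map f (PowerSeries.derivative _ F) := by
    intro f F
    ext1 k
    simp [PowerSeries.coeff_derivative]
  have hlog : PowerSeries.map (shiftHom : Lam →+* Polynomial Lam) (logDer c) =
      PowerSeries.map Polynomial.C (logDer c) + Z := by
    ext1 k
    simp only [logDer, hZ, PowerSeries.coeff_map, PowerSeries.coeff_mk, map_add]
    rw [RingHom.coe_coe, map_smul, shiftHom_pp, smul_add]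
    congr 1
    · rw [Polynomial.smul_C]
    · rw [hc, Algebra.smul_def]
      simp [pow_succ]
  refine ode_unique (D := PowerSeries.map Polynomial.C (logDer c) + Z) ?_ ?_ ?_
  · rw [hd, derivative_genSer, map_mul, hlog]
  · rw [derivative_mul', hd, derivative_genSer, map_mul, map_add, derivative_mul',
      PowerSeries.derivative_one, PowerSeries.derivative_C, PowerSeries.derivative_X]
    linear_combination -(PowerSeries.map Polynomial.C (genSer c)) * hZ1
  · rw [PowerSeries.coeff_mul]
    simp [genSer, genFam_zero, PowerSeries.coeff_map, -PowerSeries.coeff_zero_eq_constantCoeff]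

lemma shiftHom_eZ (n : ℤ) :
    shiftHom (eZ n) = Polynomial.C (eZ n) + Polynomial.X * Polynomial.C (eZ (n - 1)) := by
  rcases lt_or_ge n 0 with h | h
  · have h1 : ¬ (0 ≤ n) := by omega
    have h2 : ¬ (0 ≤ n - 1) := by omega
    simp only [eZ, h1, h2, if_false, map_zero, mul_zero, add_zero]
  · lift n to ℕ using h
    have e := congrArg (PowerSeries.coeff n) map_genSer_ee
    rw [mul_add, mul_one, mul_comm (PowerSeries.C _), ← mul_assoc, map_add,
      PowerSeries.coeff_mul_C] at e
    cases n with
    | zero => simp [eZ, ee, genFam_zero]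
    | succ n =>
      rw [PowerSeries.coeff_succ_mul_X] at e
      simp only [PowerSeries.coeff_map, genSer, PowerSeries.coeff_mk] at e
      have h1 : (0 : ℤ) ≤ n + 1 := by omega
      simp only [eZ, ee, Nat.cast_add, Nat.cast_one, add_sub_cancel_right, h1, Int.natCast_nonneg,
        if_true]
      rw [mul_comm]
      exact e

/-! ### The operators `h_j(∂)` -/

section

/-- The operator `i · ∂/∂p_i`. -/
def theta (i : ℕ+) : Module.End ℚ Lam := ((i : ℕ) : ℚ) • (pderiv i).toLinearMap

lemma pderiv_pderiv_comm' (i j : ℕ+) (P : Lam) :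
    pderiv i (pderiv j P) = pderiv j (pderiv i P) := by
  have h : ⁅(pderiv i : Derivation ℚ Lam Lam), (pderiv j : Derivation ℚ Lam Lam)⁆ = 0 := by
    apply derivation_ext
    intro k
    rw [Derivation.commutator_apply, pderiv_X, pderiv_X, Derivation.coe_zero, Pi.zero_apply]
    by_cases h1 : i = k <;> by_cases h2 : j = k <;> simp [h1, h2]
  have h' := congrArg (fun D : Derivation ℚ Lam Lam => D P) h
  simpa [Derivation.commutator_apply, sub_eq_zero] using h'

lemma theta_comm (i j : ℕ+) : theta i * theta j = theta j * theta i := by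
  refine LinearMap.ext fun P => ?_
  simp [theta, pderiv_pderiv_comm' i j, smul_comm ((i : ℕ) : ℚ)]

/-- The (commutative) algebra of operators generated by the `i · ∂/∂p_i`. -/
abbrev thetaAlg : Subalgebra ℚ (Module.End ℚ Lam) := Algebra.adjoin ℚ (Set.range theta)

instance : IsMulCommutative thetaAlg :=
  Algebra.isMulCommutative_adjoin ℚ (by
    rintro _ ⟨i, rfl⟩ _ ⟨j, rfl⟩
    exact theta_comm i j)

open scoped IsMulCommutative

/-- `theta i` as an element of the commutative algebra `thetaAlg`. -/
def theta' (i : ℕ+) : thetaAlg := ⟨theta i, Algebra.subset_adjoin ⟨i, rfl⟩⟩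

/-- The substitution `p_i ↦ i · ∂/∂p_i` as an algebra homomorphism. -/
def substHom : Lam →ₐ[ℚ] thetaAlg := aeval theta'

lemma monOp_eq (α : ℕ+ →₀ ℕ) :
    monOp α = ((∏ i ∈ α.support, theta' i ^ α i : thetaAlg) : Module.End ℚ Lam) := by
  have h : (∏ i ∈ α.support, theta' i ^ α i : thetaAlg) =
      ((α.support.sort (· ≤ ·)).map fun i => theta' i ^ α i).prod := by
    rw [← Multiset.prod_coe, ← Multiset.map_coe, Finset.sort_eq]
    rfl
  rw [h, monOp, ← Subalgebra.coe_val, map_list_prod, List.map_map]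
  rfl

lemma Dop_eq (f P : Lam) : Dop f P = (substHom f : Module.End ℚ Lam) P := by
  rw [substHom, aeval_def, eval₂_eq, Dop]
  rw [← Subalgebra.coe_val, map_sum, LinearMap.sum_apply]
  refine Finset.sum_congr rfl fun α _ => ?_
  rw [monOp_eq, map_mul]
  rfl

lemma Dop_hh_zero (P : Lam) : Dop (hh 0) P = P := by
  rw [Dop_eq, hh, genFam_zero, map_one]
  rfl

lemma Dop_hh_succ (k : ℕ) (P : Lam) :
    ((k : ℚ) + 1) • Dop (hh (k + 1)) P =
      ∑ i ∈ Finset.range (k + 1), ((i : ℚ) + 1) • Dop (hh (k - i)) (pderiv i.succPNat P) := by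
  have h := congrArg (fun f => (substHom f : Module.End ℚ Lam) P) (genFam_succ (fun _ => 1) k)
  simp only [one_smul, map_smul, map_sum, map_mul] at h
  rw [← Subalgebra.coe_val, map_smul, map_sum] at h
  rw [LinearMap.smul_apply, LinearMap.sum_apply] at h
  rw [Dop_eq]
  refine h.trans (Finset.sum_congr rfl fun i _ => ?_)
  rw [mul_comm, map_mul, Dop_eq]
  have h2 : substHom (pp i.succPNat) = theta' i.succPNat := aeval_X _ _
  rw [h2, Module.End.mul_apply]
  have h3 : thetaAlg.val (theta' i.succPNat) P = ((i : ℚ) + 1) • pderiv i.succPNat P := by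
    change (((i.succPNat : ℕ+) : ℕ) : ℚ) • pderiv i.succPNat P = _
    simp
  rw [h3, map_smul]
  rfl

end

/-- Coefficientwise chain rule `d/dz Φ(P) = ∑_i (i+1) z^i Φ(∂P/∂p_{i+1})` for the shift `Φ`. -/
lemma coeff_shiftHom_succ (P : Lam) (k : ℕ) :
    ((k : ℚ) + 1) • (shiftHom P).coeff (k + 1) =
      ∑ i ∈ Finset.range (k + 1),
        ((i : ℚ) + 1) • (shiftHom (pderiv i.succPNat P)).coeff (k - i) := by
  induction P using MvPolynomial.induction_on generalizing k with
  | C a =>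
    have : shiftHom (C a) = Polynomial.C (C a) := by
      rw [shiftHom, aeval_C]; rfl
    simp [this]
  | add P Q hP hQ =>
    simp only [map_add, Polynomial.coeff_add, smul_add, Finset.sum_add_distrib, hP, hQ]
  | mul_X P n ih =>
    have hn := n.pos
    have hmul : ∀ (Q : Lam) (m : ℕ), (shiftHom (Q * X n)).coeff m =
        (shiftHom Q).coeff m * X n +
          if (n : ℕ) ≤ m then (shiftHom Q).coeff (m - n) else 0 := by
      intro Q m
      rw [map_mul, shiftHom_X, mul_add, Polynomial.coeff_add, Polynomial.coeff_mul_C,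
        Polynomial.coeff_mul_X_pow']
    have hpd : ∀ i : ℕ, pderiv i.succPNat (P * X n) =
        pderiv i.succPNat P * X n + if i + 1 = (n : ℕ) then P else 0 := by
      intro i
      rw [Derivation.leibniz, pderiv_X, Pi.single_apply, smul_eq_mul, smul_eq_mul, add_comm,
        mul_comm (X n)]
      have : n = i.succPNat ↔ i + 1 = (n : ℕ) := by
        rw [← PNat.coe_inj]; simp [eq_comm]
      simp [this]
    have hterm : ∀ i ∈ Finset.range (k + 1),
        ((i : ℚ) + 1) • (shiftHom (pderiv i.succPNat (P * X n))).coeff (k - i) =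
          (((i : ℚ) + 1) • (shiftHom (pderiv i.succPNat P)).coeff (k - i)) * X n +
          (if (n : ℕ) + i ≤ k then
            ((i : ℚ) + 1) • (shiftHom (pderiv i.succPNat P)).coeff (k - n - i) else 0) +
          (if i = (n : ℕ) - 1 then (n : ℚ) • (shiftHom P).coeff (k + 1 - n) else 0) := by
      intro i hi
      rw [Finset.mem_range] at hi
      rw [hpd, map_add, Polynomial.coeff_add, hmul, smul_add, smul_add, smul_mul_assoc]
      congr 1
      · congr 1
        have : ((n : ℕ) ≤ k - i) ↔ ((n : ℕ) + i ≤ k) := by omega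
        rw [Nat.sub_right_comm]
        simp only [this, smul_ite, smul_zero]
      · by_cases h : i + 1 = (n : ℕ)
        · have h' : i = (n : ℕ) - 1 := by omega
          rw [if_pos h, if_pos h', ← h, show k + 1 - (i + 1) = k - i by omega]
          push_cast
          rfl
        · have h' : ¬ i = (n : ℕ) - 1 := by omega
          rw [if_neg h, if_neg h']
          simp
    rw [Finset.sum_congr rfl hterm, Finset.sum_add_distrib, Finset.sum_add_distrib,
      ← Finset.sum_mul, ← ih, hmul, smul_add, smul_mul_assoc, add_assoc]
    congr 1
    rw [Finset.sum_ite_eq']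
    by_cases h1 : (n : ℕ) ≤ k
    · obtain ⟨m, hm⟩ := Nat.exists_eq_add_of_le h1
      rw [if_pos (by omega), if_pos (Finset.mem_range.2 (by omega))]
      have hs : (∑ i ∈ Finset.range (k + 1), if (n : ℕ) + i ≤ k then
            ((i : ℚ) + 1) • (shiftHom (pderiv i.succPNat P)).coeff (k - n - i) else 0) =
          ((m : ℚ) + 1) • (shiftHom P).coeff (m + 1) := by
        rw [ih, ← Finset.sum_filter]
        refine Finset.sum_congr ?_ fun i _ => ?_
        · ext i
          simp only [Finset.mem_filter, Finset.mem_range]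
          omega
        · rw [show k - n = m by omega]
      rw [hs, show k + 1 - n = m + 1 by omega, ← add_smul, hm]
      push_cast
      congr 1
      ring
    · rw [Finset.sum_eq_zero (fun i _ => if_neg (by omega)), zero_add]
      by_cases h2 : (n : ℕ) = k + 1
      · rw [if_pos (by omega), if_pos (Finset.mem_range.2 (by omega)), h2]
        push_cast
        rfl
      · rw [if_neg (by omega), if_neg (by rw [Finset.mem_range]; omega), smul_zero]

lemma coeff_shiftHom_zero (P : Lam) : (shiftHom P).coeff 0 = P := by
  induction P using MvPolynomial.induction_on with
  | C a =>
    have : shiftHom (C a) = Polynomial.C (C a) := by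
      rw [shiftHom, aeval_C]; rfl
    simp [this]
  | add P Q hP hQ => rw [map_add, Polynomial.coeff_add, hP, hQ]
  | mul_X P n ih =>
    rw [map_mul, Polynomial.mul_coeff_zero, ih, shiftHom_X]
    simp [n.ne_zero.symm]

/-- `h_j(∂) P` is the `z^j`-coefficient of `P(p_1 + z, p_2 + z², …)`: both sides satisfy the
same recursion in `j`. -/
lemma Dop_hh (j : ℕ) (P : Lam) : Dop (hh j) P = (shiftHom P).coeff j := by
  induction j using Nat.strong_induction_on generalizing P with
  | _ j ih =>
    cases j with
    | zero => rw [Dop_hh_zero, coeff_shiftHom_zero]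
    | succ k =>
      have hk : ((k : ℚ) + 1) ≠ 0 := by positivity
      apply smul_right_injective Lam hk
      change ((k : ℚ) + 1) • _ = ((k : ℚ) + 1) • _
      rw [Dop_hh_succ, coeff_shiftHom_succ]
      refine Finset.sum_congr rfl fun i _ => ?_
      rw [ih _ (by omega)]

lemma natDegree_shiftHom_le (P : Lam) : (shiftHom P).natDegree ≤ wbound P := by
  rw [shiftHom, aeval_def, eval₂_eq]
  refine Polynomial.natDegree_sum_le_of_forall_le _ _ fun α hα => ?_
  have h1 : (α.sum fun i k => (i : ℕ) * k) ≤ wbound P :=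
    Finset.le_sup (f := fun α : ℕ+ →₀ ℕ => α.sum fun i k => (i : ℕ) * k) hα
  refine le_trans ?_ h1
  rw [IsScalarTower.algebraMap_apply ℚ Lam (Polynomial Lam), Polynomial.algebraMap_eq]
  refine (Polynomial.natDegree_C_mul_le _ _).trans ?_
  refine (Polynomial.natDegree_prod_le _ _).trans ?_
  refine Finset.sum_le_sum fun i _ => ?_
  refine Polynomial.natDegree_pow_le.trans ?_
  rw [mul_comm]
  refine Nat.mul_le_mul_right _ ?_
  refine (Polynomial.natDegree_add_le _ _).trans ?_
  simp

/-- For `n ≥ 0` the operator `S*_n` sums over all powers of `z` in the shift of `P`. Any bound `N`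
beyond the degree of the shift may replace the weighted degree of `P`. -/
lemma SstarOp_eq (n : ℕ) (P : Lam) (N : ℕ) (hN : (shiftHom P).natDegree < N) :
    SstarOp n P =
      ∑ j ∈ Finset.range N, (-1 : Lam) ^ (j + n) * (eZ (n + j) * (shiftHom P).coeff j) := by
  have h1 : SstarOp n P = ∑ j ∈ Finset.range (wbound P + 1),
      (-1 : Lam) ^ (j + n) * (eZ (n + j) * (shiftHom P).coeff j) := by
    refine Finset.sum_congr rfl fun j _ => ?_
    rw [if_pos (by omega), Dop_hh, Algebra.smul_def, ← Nat.cast_add, zpow_natCast,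
      add_comm (n : ℤ) j, ← Nat.cast_add]
    simp
  have key : ∀ M, (shiftHom P).natDegree < M → ∀ K, M ≤ K →
      ∑ j ∈ Finset.range M, (-1 : Lam) ^ (j + n) * (eZ (n + j) * (shiftHom P).coeff j) =
      ∑ j ∈ Finset.range K, (-1 : Lam) ^ (j + n) * (eZ (n + j) * (shiftHom P).coeff j) := by
    intro M hM K hK
    refine Finset.sum_subset (Finset.range_mono hK) fun j _ hj => ?_
    rw [Polynomial.coeff_eq_zero_of_natDegree_lt, mul_zero, mul_zero]
    rw [Finset.mem_range] at hj
    omega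
  rw [h1, key _ (Nat.lt_succ_of_le (natDegree_shiftHom_le P)) _ (le_max_left _ N),
    key N hN _ (le_max_right (wbound P + 1) N)]

lemma SstarOp_smul (n : ℕ) (a : ℚ) (P : Lam) : SstarOp n (a • P) = a • SstarOp n P := by
  rw [SstarOp_eq n (a • P) ((shiftHom P).natDegree + 1) ?_,
    SstarOp_eq n P ((shiftHom P).natDegree + 1) (Nat.lt_succ_self _), Finset.smul_sum]
  · refine Finset.sum_congr rfl fun j _ => ?_
    rw [map_smul, Polynomial.coeff_smul, mul_smul_comm, mul_smul_comm]
  · rw [map_smul]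
    exact Nat.lt_succ_of_le (Polynomial.natDegree_smul_le _ _)

/-! ### The recursion on `e`-determinants -/

/-- If consecutive columns `v_j` of an `l × (l+1)` array are combined to `v_{j+1} + z v_j`, the
resulting determinant has the maximal minors of the array as coefficients in `z`. The proof adds
the row `(1, -z, z², …)` on top, which column operations turn into `(1, 0, 0, …)`. -/
lemma det_consecutive {R : Type*} [CommRing R] (l : ℕ) (a : Fin l → ℕ → R) :
    (Matrix.of fun i j : Fin l =>
        Polynomial.C (a i (j + 1)) + Polynomial.X * Polynomial.C (a i j)).det =
      ∑ c : Fin (l + 1), Polynomial.X ^ (c : ℕ) *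
        Polynomial.C (Matrix.of fun i j : Fin l => a i (c.succAbove j)).det := by
  let U : Matrix (Fin (l + 1)) (Fin (l + 1)) (Polynomial R) :=
    Matrix.of fun i c => Fin.cases ((-Polynomial.X) ^ (c : ℕ))
      (fun i' => Polynomial.C (a i' c)) i
  let V : Matrix (Fin (l + 1)) (Fin (l + 1)) (Polynomial R) :=
    Matrix.of fun i c => Fin.cases (U i 0)
      (fun c' => U i c'.succ + Polynomial.X * U i c'.castSucc) c
  have hUV : U.det = V.det := by
    refine Matrix.det_eq_of_forall_col_eq_smul_add_pred (fun _ => -Polynomial.X) ?_ ?_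
    · intro i
      simp [V]
    · intro i j
      simp [V]
  have hV : V.det = (Matrix.of fun i j : Fin l =>
        Polynomial.C (a i (j + 1)) + Polynomial.X * Polynomial.C (a i j)).det := by
    rw [Matrix.det_succ_row_zero, Fin.sum_univ_succ, Finset.sum_eq_zero]
    · simp only [Fin.val_zero, pow_zero, one_mul, add_zero]
      have h0 : V 0 0 = 1 := by simp [V, U]
      rw [h0, one_mul]
      congr 1
    · intro j _
      have h0 : V 0 j.succ = 0 := by
        simp [V, U, pow_succ]
        ring
      rw [h0]
      simp
  have hU : U.det = ∑ c : Fin (l + 1), Polynomial.X ^ (c : ℕ) *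
        Polynomial.C (Matrix.of fun i j : Fin l => a i (c.succAbove j)).det := by
    rw [Matrix.det_succ_row_zero]
    refine Finset.sum_congr rfl fun c _ => ?_
    have h0 : U 0 c = (-Polynomial.X) ^ (c : ℕ) := by simp [U]
    rw [h0, ← mul_pow, RingHom.map_det]
    congr 1
    simp
  rw [← hV, ← hUV, hU]

lemma shiftHom_schurE {l : ℕ} (ρ : Fin l → ℤ) :
    shiftHom (schurE ρ) = ∑ c : Fin (l + 1), Polynomial.X ^ (c : ℕ) *
      Polynomial.C (Matrix.of fun i j : Fin l =>
        eZ (ρ i - (i : ℤ) - 1 + ((c.succAbove j : ℕ) : ℤ))).det := by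
  rw [← det_consecutive l (fun i c => eZ (ρ i - (i : ℤ) - 1 + (c : ℤ))), schurE, AlgHom.map_det]
  congr 1
  ext1 i j
  simp only [AlgHom.mapMatrix_apply, Matrix.map_apply, Matrix.of_apply, shiftHom_eZ]
  push_cast
  rw [show ρ i - (i : ℤ) - 1 + ((j : ℤ) + 1) = ρ i - i + j by ring,
    show ρ i - (i : ℤ) - 1 + (j : ℤ) = ρ i - i + j - 1 by ring]

/-- `S*_n` prepends the row `n` to an `e`-determinant, up to sign: this is the Laplace expansion
of the larger determinant along its first row. -/
lemma SstarOp_schurE {l : ℕ} (n : ℕ) (ρ : Fin l → ℤ) :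
    SstarOp n (schurE ρ) = ((-1 : ℚ)) ^ n • schurE (Fin.cons (n : ℤ) ρ : Fin (l + 1) → ℤ) := by
  have hdeg : (shiftHom (schurE ρ)).natDegree < l + 1 := by
    rw [shiftHom_schurE, Nat.lt_succ_iff]
    refine Polynomial.natDegree_sum_le_of_forall_le _ _ fun c _ => ?_
    refine (Polynomial.natDegree_mul_C_le _ _).trans ?_
    refine (Polynomial.natDegree_X_pow_le _).trans ?_
    omega
  rw [SstarOp_eq n _ _ hdeg, Finset.sum_range, schurE.eq_def (Fin.cons _ _),
    Matrix.det_succ_row_zero, Finset.smul_sum]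
  refine Finset.sum_congr rfl fun c _ => ?_
  have hc : (shiftHom (schurE ρ)).coeff (c : ℕ) = (Matrix.of fun i j : Fin l =>
        eZ (ρ i - (i : ℤ) - 1 + ((c.succAbove j : ℕ) : ℤ))).det := by
    rw [shiftHom_schurE, Polynomial.finsetSum_coeff, Finset.sum_eq_single c]
    · rw [Polynomial.coeff_mul_C, Polynomial.coeff_X_pow, if_pos rfl, one_mul]
    · intro b _ hb
      rw [Polynomial.coeff_mul_C, Polynomial.coeff_X_pow, if_neg, zero_mul]
      intro h
      exact hb (Fin.ext h.symm)
    · simp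
  rw [hc, Algebra.smul_def, map_pow, map_neg, map_one, pow_add]
  have hsub : (Matrix.of fun i j : Fin (l + 1) =>
      eZ ((Fin.cons (n : ℤ) ρ : Fin (l + 1) → ℤ) i - (i.1 : ℤ) + (j.1 : ℤ))).submatrix
        Fin.succ c.succAbove = Matrix.of fun i j : Fin l =>
        eZ (ρ i - (i : ℤ) - 1 + ((c.succAbove j : ℕ) : ℤ)) := by
    ext1 i j
    simp only [Matrix.submatrix_apply, Matrix.of_apply, Fin.cons_succ, Fin.val_succ]
    push_cast
    congr 1
    ring
  rw [hsub]
  simp only [Matrix.of_apply, Fin.cons_zero, Fin.val_zero, Nat.cast_zero, sub_zero]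
  ring

lemma foldr_SstarOp (l : ℕ) (lam : Fin l → ℕ) :
    (List.ofFn fun i => (lam i : ℤ)).foldr SstarOp 1 =
      ((-1 : ℚ)) ^ (∑ i, lam i) • schurE (fun i => (lam i : ℤ)) := by
  induction l with
  | zero => simp [schurE]
  | succ l ih =>
    rw [List.ofFn_succ, List.foldr_cons, ih (fun i => lam i.succ), SstarOp_smul, SstarOp_schurE,
      smul_smul, ← pow_add, Fin.sum_univ_succ, add_comm]
    congr 2
    ext1 i
    refine Fin.cases ?_ (fun i => ?_) i <;> simp

/-! ### The dual Jacobi–Trudi identity -/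

lemma sum_hZ_eZ (n : ℕ) :
    ∑ x ∈ Finset.HasAntidiagonal.antidiagonal n, hZ x.1 * ((-1) ^ x.2 * eZ x.2) =
      if n = 0 then 1 else 0 := by
  have h := congrArg (PowerSeries.coeff n) genSer_mul_genSer_neg
  rw [PowerSeries.coeff_mul, PowerSeries.coeff_one] at h
  rw [← h]
  refine Finset.sum_congr rfl fun x _ => ?_
  simp only [genSer, PowerSeries.coeff_mk, ← neg_one_pow_smul_ee, hZ, eZ, hh,
    Int.natCast_nonneg, if_true, Int.toNat_natCast, Algebra.smul_def, map_pow, map_neg, map_one]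

/-- The lower unitriangular Toeplitz matrix `(h_{a-b})`. -/
def hMat (N : ℕ) : Matrix (Fin N) (Fin N) Lam :=
  Matrix.of fun a b => hZ ((a : ℤ) - (b : ℤ))

/-- The lower unitriangular Toeplitz matrix `((-1)^{a-b} e_{a-b})`; the exponent is written
`a + b`, which has the same parity. -/
def eMat (N : ℕ) : Matrix (Fin N) (Fin N) Lam :=
  Matrix.of fun a b => (-1) ^ ((a : ℕ) + (b : ℕ)) * eZ ((a : ℤ) - (b : ℤ))

lemma hZ_neg {n : ℤ} (h : n < 0) : hZ n = 0 := if_neg (by omega)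
lemma eZ_neg {n : ℤ} (h : n < 0) : eZ n = 0 := if_neg (by omega)

lemma det_hMat (N : ℕ) : (hMat N).det = 1 := by
  rw [Matrix.det_of_isLowerTriangular]
  · refine Finset.prod_eq_one fun i _ => ?_
    simp [hMat, hZ, hh, genFam_zero]
  · intro i j hij
    have : i < j := hij
    exact hZ_neg (by omega)

lemma hMat_mul_eMat (N : ℕ) : hMat N * eMat N = 1 := by
  ext1 a b
  rw [Matrix.mul_apply, Matrix.one_apply]
  rcases lt_or_ge a b with hab | hab
  · rw [if_neg hab.ne]
    refine Finset.sum_eq_zero fun c _ => ?_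
    rcases lt_or_ge a c with h | h
    · rw [hMat, Matrix.of_apply, hZ_neg (by omega), zero_mul]
    · rw [eMat, Matrix.of_apply, eZ_neg (by omega), mul_zero, mul_zero]
  · have hn := sum_hZ_eZ ((a : ℕ) - (b : ℕ))
    have hcond : ((a : ℕ) - (b : ℕ) = 0) ↔ a = b := by
      rw [Fin.ext_iff]; have : (b : ℕ) ≤ a := hab; omega
    simp only [hcond] at hn
    rw [← hn]
    have hba : (b : ℕ) ≤ a := hab
    have hsupp : ∑ c, hMat N a c * eMat N c b =
        ∑ c ∈ Finset.Icc b a, hMat N a c * eMat N c b := by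
      symm
      refine Finset.sum_subset (Finset.subset_univ _) fun c _ hc => ?_
      rw [Finset.mem_Icc, not_and_or] at hc
      rcases hc with h | h
      · rw [eMat, Matrix.of_apply, eZ_neg (by omega), mul_zero, mul_zero]
      · rw [hMat, Matrix.of_apply, hZ_neg (by omega), zero_mul]
    rw [hsupp]
    refine Finset.sum_bij' (fun c _ => ((a : ℕ) - (c : ℕ), (c : ℕ) - (b : ℕ)))
      (fun x hx => ⟨(b : ℕ) + x.2, by
        have := Finset.HasAntidiagonal.mem_antidiagonal.1 hx
        omega⟩) ?_ ?_ ?_ ?_ ?_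
    · intro c hc
      rw [Finset.mem_Icc] at hc
      rw [Finset.HasAntidiagonal.mem_antidiagonal]
      have h1 : (b : ℕ) ≤ c := hc.1
      have h2 : (c : ℕ) ≤ a := hc.2
      dsimp only
      omega
    · intro x hx
      have := Finset.HasAntidiagonal.mem_antidiagonal.1 hx
      rw [Finset.mem_Icc, Fin.le_def, Fin.le_def]
      dsimp only
      omega
    · intro c hc
      rw [Finset.mem_Icc] at hc
      have h1 : (b : ℕ) ≤ c := hc.1
      ext
      dsimp only
      omega
    · intro x hx
      have := Finset.HasAntidiagonal.mem_antidiagonal.1 hx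
      ext <;> dsimp only <;> omega
    · intro c hc
      rw [Finset.mem_Icc] at hc
      have h1 : (b : ℕ) ≤ c := hc.1
      have h2 : (c : ℕ) ≤ a := hc.2
      simp only [hMat, eMat, Matrix.of_apply]
      rw [Nat.cast_sub h1, Nat.cast_sub h2]
      congr 2
      obtain ⟨m, hm⟩ := Nat.exists_eq_add_of_le h1
      rw [hm, Nat.add_sub_cancel_left, show (b : ℕ) + m + b = 2 * b + m by ring, pow_add, pow_mul]
      simp

/-- Jacobi's complementary minor identity for a block decomposition. -/
lemma det_block_complement {m n R : Type*} [Fintype m] [Fintype n] [DecidableEq m] [DecidableEq n]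
    [CommRing R] (A B : Matrix (m ⊕ n) (m ⊕ n) R) (h : A * B = 1) :
    A.det * B.toBlocks₂₂.det = A.toBlocks₁₁.det := by
  have e : A * Matrix.fromBlocks 1 B.toBlocks₁₂ 0 B.toBlocks₂₂ =
      Matrix.fromBlocks A.toBlocks₁₁ 0 A.toBlocks₂₁ 1 := by
    have hA := Matrix.fromBlocks_toBlocks A
    have hB := Matrix.fromBlocks_toBlocks B
    rw [← hA, ← hB, Matrix.fromBlocks_multiply, ← Matrix.fromBlocks_one, Matrix.fromBlocks_inj] at h
    conv_lhs => rw [← hA]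
    rw [Matrix.fromBlocks_multiply, Matrix.fromBlocks_inj]
    refine ⟨by simp, h.2.1, by simp, h.2.2.2⟩
  have e' := congrArg Matrix.det e
  rw [Matrix.det_mul, Matrix.det_fromBlocks_zero₂₁, Matrix.det_fromBlocks_zero₁₂] at e'
  simpa using e'

/-- The conjugate partition, `0`-indexed: the number of parts exceeding `j`. -/
def conjPart {l : ℕ} (lam : Fin l → ℕ) (j : ℕ) : ℕ :=
  (Finset.univ.filter fun i : Fin l => j + 1 ≤ lam i).card

lemma conjPart_le {l : ℕ} (lam : Fin l → ℕ) (j : ℕ) : conjPart lam j ≤ l :=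
  (Finset.card_le_univ _).trans_eq (Fintype.card_fin l)

lemma conjPart_anti {l : ℕ} (lam : Fin l → ℕ) {j k : ℕ} (h : j ≤ k) : conjPart lam k ≤ conjPart lam j := by
  refine Finset.card_le_card fun i hi => ?_
  simp only [Finset.mem_filter, Finset.mem_univ, true_and] at hi ⊢
  omega

/-- The box `(i, j)` lies in the diagram of `λ` exactly if `(j, i)` lies in that of `λ'`. -/
lemma lt_conjPart_iff {l : ℕ} {lam : Fin l → ℕ} (hlam : Antitone lam) (i : Fin l) (j : ℕ) :
    (i : ℕ) < conjPart lam j ↔ j < lam i := by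
  constructor
  · intro h
    by_contra hj
    have hsub : (Finset.univ.filter fun i : Fin l => j + 1 ≤ lam i) ⊆ Finset.Iio i := by
      intro k hk
      simp only [Finset.mem_filter, Finset.mem_univ, true_and] at hk
      rw [Finset.mem_Iio]
      by_contra hik
      have := hlam (not_lt.1 hik)
      omega
    have := Finset.card_le_card hsub
    rw [Fin.card_Iio] at this
    unfold conjPart at h
    omega
  · intro h
    have hsub : Finset.Iic i ⊆ (Finset.univ.filter fun i : Fin l => j + 1 ≤ lam i) := by
      intro k hk
      rw [Finset.mem_Iic] at hk
      simp only [Finset.mem_filter, Finset.mem_univ, true_and]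
      have := hlam hk
      omega
    have := Finset.card_le_card hsub
    rw [Fin.card_Iic] at this
    exact this

section Maya

variable {l m : ℕ} (lam : Fin l → ℕ)

/-- The Maya diagram of `λ ⊆ (m^l)`: the `m + l` steps of its boundary path split into horizontal
ones (`inl`) and vertical ones (`inr`), each listed in increasing order. In `0`-indexed terms the
positions are `λ'_{m-1-j} + j` and `m + i - λ_i`; the subtraction is exact when all `λ_i ≤ m`. -/
def maya : Fin m ⊕ Fin l → Fin (m + l) :=
  Sum.elim
    (fun j => ⟨conjPart lam (m - 1 - j) + j, by have := conjPart_le lam (m - 1 - j); omega⟩)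
    (fun i => ⟨m + i - lam i, by omega⟩)

variable {lam}

lemma maya_inl_lt {j k : Fin m} (h : j < k) :
    maya lam (Sum.inl j) < maya lam (Sum.inl k) := by
  have h' : (j : ℕ) < k := h
  have := conjPart_anti lam (show m - 1 - (k : ℕ) ≤ m - 1 - j by omega)
  simp only [maya, Sum.elim_inl, Fin.mk_lt_mk]
  omega

lemma maya_inr_lt (hlam : Antitone lam) (hm : ∀ i, lam i ≤ m) {i k : Fin l} (h : i < k) :
    maya (m := m) lam (Sum.inr i) < maya lam (Sum.inr k) := by
  have h' : (i : ℕ) < k := h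
  have h1 := hlam h.le
  have h2 := hm i
  simp only [maya, Sum.elim_inr, Fin.mk_lt_mk]
  omega

lemma maya_inr_lt_inl (hlam : Antitone lam) (hm : ∀ i, lam i ≤ m) {j : Fin m} {i : Fin l}
    (h : m - 1 - (j : ℕ) < lam i) : maya lam (Sum.inr i) < maya lam (Sum.inl j) := by
  have h1 := (lt_conjPart_iff hlam i _).2 h
  have h2 := hm i
  simp only [maya, Sum.elim_inr, Sum.elim_inl, Fin.mk_lt_mk]
  omega

lemma maya_inl_lt_inr (hlam : Antitone lam) (hm : ∀ i, lam i ≤ m) {j : Fin m} {i : Fin l}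
    (h : ¬ m - 1 - (j : ℕ) < lam i) : maya lam (Sum.inl j) < maya lam (Sum.inr i) := by
  have h1 := mt (lt_conjPart_iff hlam i _).1 h
  have h2 := hm i
  simp only [maya, Sum.elim_inr, Sum.elim_inl, Fin.mk_lt_mk]
  omega

lemma maya_bijective (hlam : Antitone lam) (hm : ∀ i, lam i ≤ m) :
    Function.Bijective (maya (m := m) lam) := by
  rw [Fintype.bijective_iff_injective_and_card]
  refine ⟨?_, by simp⟩
  have hx : ∀ (j : Fin m) (i : Fin l), maya lam (Sum.inl j) ≠ maya lam (Sum.inr i) := by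
    intro j i
    by_cases h : m - 1 - (j : ℕ) < lam i
    · exact (maya_inr_lt_inl hlam hm h).ne'
    · exact (maya_inl_lt_inr hlam hm h).ne
  rintro (j | i) (k | k) h
  · rcases lt_trichotomy j k with hjk | hjk | hjk
    · exact absurd h (maya_inl_lt hjk).ne
    · rw [hjk]
    · exact absurd h (maya_inl_lt hjk).ne'
  · exact absurd h (hx _ _)
  · exact absurd h.symm (hx _ _)
  · rcases lt_trichotomy i k with hjk | hjk | hjk
    · exact absurd h (maya_inr_lt hlam hm hjk).ne
    · rw [hjk]
    · exact absurd h (maya_inr_lt hlam hm hjk).ne'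

/-- The Maya diagram as a permutation of `Fin (m + l)`. -/
def mayaPerm (hlam : Antitone lam) (hm : ∀ i, lam i ≤ m) : Equiv.Perm (Fin (m + l)) :=
  finSumFinEquiv.symm.trans (Equiv.ofBijective _ (maya_bijective hlam hm))

/-- The inversions of the Maya permutation are the boxes of `λ`. -/
lemma sign_mayaPerm (hlam : Antitone lam) (hm : ∀ i, lam i ≤ m) :
    Equiv.Perm.sign (mayaPerm hlam hm) = (-1) ^ ∑ i, lam i := by
  have hl : ∀ j : Fin m, mayaPerm hlam hm (Fin.castAdd l j) = maya lam (Sum.inl j) := by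
    intro j
    simp [mayaPerm]
  have hr : ∀ i : Fin l, mayaPerm hlam hm (Fin.natAdd m i) = maya lam (Sum.inr i) := by
    intro i
    simp [mayaPerm]
  have hIoi : ∀ (a : Fin (m + l)) (g : Fin (m + l) → ℤˣ),
      ∏ b ∈ Finset.Ioi a, g b = ∏ b, if a < b then g b else 1 := by
    intro a g
    rw [← Finset.prod_filter]
    congr 1
    ext b
    simp
  have hll : ∀ j k : Fin m, (if Fin.castAdd l j < Fin.castAdd l k then
      (if maya lam (Sum.inl j) < maya lam (Sum.inl k) then (1 : ℤˣ) else -1) else 1) = 1 := by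
    intro j k
    split_ifs with h1 h2
    · rfl
    · refine absurd (maya_inl_lt ?_) h2
      exact Fin.lt_def.2 (Fin.lt_def.1 h1)
    · rfl
  have hrr : ∀ j k : Fin l, (if Fin.natAdd m j < Fin.natAdd m k then
      (if maya (m := m) lam (Sum.inr j) < maya lam (Sum.inr k) then (1 : ℤˣ) else -1)
        else 1) = 1 := by
    intro j k
    split_ifs with h1 h2
    · rfl
    · refine absurd (maya_inr_lt hlam hm ?_) h2
      simpa using h1
    · rfl
  have hlr : ∀ (j : Fin m) (i : Fin l), (if Fin.castAdd l j < Fin.natAdd m i then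
      (if maya lam (Sum.inl j) < maya lam (Sum.inr i) then (1 : ℤˣ) else -1) else 1) =
        if m - 1 - (j : ℕ) < lam i then -1 else 1 := by
    intro j i
    rw [if_pos (by rw [Fin.lt_def]; simp; omega)]
    by_cases h : m - 1 - (j : ℕ) < lam i
    · rw [if_pos h, if_neg (maya_inr_lt_inl hlam hm h).not_gt]
    · rw [if_neg h, if_pos (maya_inl_lt_inr hlam hm h)]
  have hrl : ∀ (i : Fin l) (j : Fin m), (if Fin.natAdd m i < Fin.castAdd l j then
      (if maya lam (Sum.inr i) < maya lam (Sum.inl j) then (1 : ℤˣ) else -1) else 1) = 1 := by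
    intro i j
    rw [if_neg (by rw [Fin.lt_def]; simp; omega)]
  rw [Equiv.Perm.sign_eq_prod_prod_Ioi]
  simp only [hIoi, Fin.prod_univ_add, hl, hr, hll, hrr, hlr, hrl, Finset.prod_const_one, one_mul,
    mul_one]
  rw [Finset.prod_comm, ← Finset.prod_pow_eq_pow_sum]
  refine Finset.prod_congr rfl fun i _ => ?_
  rw [← Equiv.prod_comp Fin.revPerm]
  have hrev : ∀ j : Fin m, (m - 1 - (Fin.revPerm j : ℕ) < lam i) ↔ ((j : ℕ) < lam i) := by
    intro j
    simp only [Fin.revPerm_apply, Fin.val_rev]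
    omega
  simp only [hrev]
  rw [← Finset.prod_filter, Finset.prod_const, Fin.card_filter_val_lt, min_eq_right (hm i)]

end Maya

/-- The dual Jacobi–Trudi identity: the two determinants are complementary minors of the mutually
inverse matrices `hMat` and `eMat`, with rows and columns sorted by the Maya diagram. -/
lemma schur_conjPart_eq_schurE {l : ℕ} (m : ℕ) (lam : Fin l → ℕ) (hlam : Antitone lam)
    (hm : ∀ i, lam i ≤ m) :
    schur (fun j : Fin m => (conjPart lam j : ℤ)) = schurE (fun i => (lam i : ℤ)) := by
  set f : Fin m ⊕ Fin l ≃ Fin (m + l) := Equiv.ofBijective _ (maya_bijective hlam hm) with hf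
  set A := (hMat (m + l)).submatrix f finSumFinEquiv with hA
  set B := (eMat (m + l)).submatrix finSumFinEquiv f with hB
  have hAB : A * B = 1 := by
    rw [hA, hB, Matrix.submatrix_mul_equiv, hMat_mul_eMat, Matrix.submatrix_one_equiv]
  have hdetA : A.det = (-1) ^ ∑ i, lam i := by
    have : A = ((hMat (m + l)).submatrix (mayaPerm hlam hm) id).submatrix
        finSumFinEquiv finSumFinEquiv := by
      ext1 a b
      simp [hA, hf, mayaPerm]
    rw [this, Matrix.det_submatrix_equiv_self, Matrix.det_permute, det_hMat, sign_mayaPerm]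
    simp
  have h11 : A.toBlocks₁₁.det = schur (fun j : Fin m => (conjPart lam j : ℤ)) := by
    conv_rhs => rw [schur, ← Matrix.det_submatrix_equiv_self Fin.revPerm]
    congr 1
    ext1 i j
    simp only [Matrix.toBlocks₁₁, hA, Matrix.of_apply, Matrix.submatrix_apply, hMat, hf,
      Equiv.ofBijective_apply, maya, Sum.elim_inl, finSumFinEquiv_apply_left, Fin.val_castAdd,
      Fin.revPerm_apply, Fin.val_rev]
    rw [show m - ((i : ℕ) + 1) = m - 1 - i by omega]
    congr 1
    omega
  have h22 : B.toBlocks₂₂.det = (-1) ^ (∑ i, lam i) * schurE (fun i => (lam i : ℤ)) := by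
    have : B.toBlocks₂₂ = Matrix.of fun i j : Fin l => (-1 : Lam) ^ (m + (i : ℕ)) *
        (Matrix.of fun i j : Fin l => (-1 : Lam) ^ (m + (j : ℕ) - lam j) *
          (Matrix.of fun i j : Fin l => eZ ((lam i : ℤ) - (i.1 : ℤ) + (j.1 : ℤ))).transpose i j)
          i j := by
      ext1 i j
      have := hm j
      simp only [Matrix.toBlocks₂₂, hB, Matrix.of_apply, Matrix.submatrix_apply, eMat, hf,
        Equiv.ofBijective_apply, maya, Sum.elim_inr, finSumFinEquiv_apply_right, Fin.val_natAdd,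
        Matrix.transpose_apply]
      rw [← mul_assoc, ← pow_add]
      congr 2
      omega
    rw [this, Matrix.det_mul_column, Matrix.det_mul_row, Matrix.det_transpose, ← mul_assoc,
      ← Finset.prod_mul_distrib, ← Finset.prod_pow_eq_pow_sum, schurE]
    congr 1
    refine Finset.prod_congr rfl fun i _ => ?_
    obtain ⟨k, hk⟩ := Nat.exists_eq_add_of_le (hm i)
    rw [← pow_add, show m + (i : ℕ) + (m + i - lam i) = 2 * (k + i) + lam i by omega, pow_add,
      pow_mul]
    simp
  have h := det_block_complement A B hAB
  rw [hdetA, h11, h22, ← mul_assoc, ← mul_pow] at h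
  simpa using h.symm

/-- for every partition `λ = (λ₁ ≥ … ≥ λ_l ≥ 0)`, the dual vertex operator
components applied to the vacuum give, up to sign, the Schur function of the conjugate
partition `λ'` (where `λ'_i = #{j : λ_j ≥ i}`, `1 ≤ i ≤ λ₁`):
`S*_{λ₁} ⋯ S*_{λ_l} (1) = (−1)^{|λ|} s_{λ'} = (−1)^{|λ|} det (h_{λ'_i − i + j})_{1≤i,j≤λ₁}`;
equivalently `S*_{λ₁} ⋯ S*_{λ_l} (1) = (−1)^{|λ|} det (e_{λ_i − i + j})_{1≤i,j≤l}`. -/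
theorem dual_vertex_vacuum_eq_conjugate_schur (l : ℕ) (lam : Fin l → ℕ)
    (hlam : Antitone lam) :
    ((List.ofFn fun i => (lam i : ℤ)).foldr SstarOp 1
        = ((-1 : ℚ)) ^ (∑ i, lam i) •
          schur (fun i : Fin (if h : 0 < l then lam ⟨0, h⟩ else 0) =>
            ((Finset.univ.filter fun j : Fin l => i.1 + 1 ≤ lam j).card : ℤ))) ∧
    ((List.ofFn fun i => (lam i : ℤ)).foldr SstarOp 1
        = ((-1 : ℚ)) ^ (∑ i, lam i) • schurE (fun i => (lam i : ℤ))) := by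
  refine ⟨?_, foldr_SstarOp l lam⟩
  rw [foldr_SstarOp]
  congr 1
  refine (schur_conjPart_eq_schurE _ lam hlam fun i => ?_).symm
  have hl : 0 < l := i.pos
  rw [dif_pos hl]
  exact hlam (Fin.mk_le_of_le_val (Nat.zero_le _))
end
end

section
/- Littlewood–Richardson rule in integral-matrix form: let λ = (λ₁ ≥ … ≥ λ_m ≥ 0) and μ = (μ₁ ≥ … ≥ μ_n ≥ 0) be partitions. Then s_λ · s_μ = ∑_{M,N} C_{M,N} · s_{(λ+M, μ−N)}, where the sum ranges over all pairs M ∈ ℕ^m, N ∈ ℕ^n, C_{M,N} is the number of m×n matrices with nonnegative integer entries whose i-th row sums to M_i and whose j-th column sums to N_j, and (λ+M, μ−N) ∈ ℤ^{m+n} is the juxtaposed tuple (λ₁+M₁, …, λ_m+M_m, μ₁−N₁, …, μ_n−N_n). All but finitely many summands vanish; in fact every summand with N_j > μ_j + n − j for some j is zero. -/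
/-! The identity holds for arbitrary integer tuples. On Laurent polynomials in `x_1, …, x_l`
consider the additive functional `ev` with `x^a ↦ ∏ h_{a_i}`. Expanding determinants,
`s_ρ = ev (x^{ρ-δ} V(x))` with `V` the Vandermonde determinant (`schur_eq_ev`). For two blocks of
variables `x`, `y`, one has `V(x, y) = V(x) V(y) ∏ (y_j - x_i)`; with `z_{ij} = x_i / y_j` and
`Q = x^{λ-δ} y^{μ-δ} V(x) V(y)` this gives `ev Q = s_λ s_μ` (`ev_blockPoly`) and
`s_{(λ+M, μ-N)} = ev (Q ∏ (1 - z_{ij}) ∏ z_{ij}^{A_{ij}})` for every matrix `A` with row sums `M`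
and column sums `N` (`schur_append`).

Summing over all `A` with entries less than `K` turns `∏ (1 - z_{ij}) ∏ z_{ij}^{A_{ij}}` into
`∏ (1 - z_{ij}^K)` by the finite geometric series. For large `K`, every term involving some
`z_{ij}^K` has a negative exponent at `y_j` and is killed by `ev`, so the sum equals
`ev Q = s_λ s_μ` (`schur_mul_schur`). Matrices with larger entries contribute nothing, because a
too negative `μ_j - N_j` produces a zero row in the Jacobi–Trudi matrix. -/

open MvPolynomial

noncomputable section

/-! ### Laurent polynomials and the functional carrying `x^a` to `∏ h_{a_i}` -/

/-- Integral Laurent polynomials in `x_1, …, x_l`, the group ring of `ℤ^l`. -/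
abbrev Laurent (l : ℕ) : Type := AddMonoidAlgebra ℤ (Fin l → ℤ)

/-- The Laurent monomial `x^a`. -/
def mono {l : ℕ} (a : Fin l → ℤ) : Laurent l := AddMonoidAlgebra.single a 1

/-- The variable `x_k`. -/
def xv {l : ℕ} (k : Fin l) : Laurent l := mono (Pi.single k 1)

/-- The additive map with `x^a ↦ ∏_i h_{a_i}`, i.e. the pairing of a Laurent polynomial with
`∏_i ∑_k h_k x_i^{-k}` by taking the constant term. -/
def ev {l : ℕ} : Laurent l →+ Lam :=
  AddMonoidAlgebra.liftNC (Int.castAddHom Lam) (fun a => ∏ i, hZ (a.toAdd i))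

lemma ev_mono {l : ℕ} (a : Fin l → ℤ) : ev (mono a) = ∏ i, hZ (a i) := by
  simp [ev, mono]

lemma mono_zero {l : ℕ} : mono (0 : Fin l → ℤ) = 1 := rfl

lemma mono_add {l : ℕ} (a b : Fin l → ℤ) : mono (a + b) = mono a * mono b := by
  simp [mono]

lemma mono_pow {l : ℕ} (a : Fin l → ℤ) (k : ℕ) : mono a ^ k = mono (k • a) := by
  simp [mono, AddMonoidAlgebra.single_pow]

lemma mono_sum {l : ℕ} {ι : Type*} (s : Finset ι) (a : ι → Fin l → ℤ) :
    mono (∑ i ∈ s, a i) = ∏ i ∈ s, mono (a i) := by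
  classical
  induction s using Finset.induction_on with
  | empty => simp [mono_zero]
  | insert i s hi ih => rw [Finset.sum_insert hi, Finset.prod_insert hi, mono_add, ih]

/-- The Leibniz expansion of a Vandermonde determinant in a subfamily of the variables. -/
lemma det_vandermonde_xv {k l : ℕ} (e : Fin k → Fin l) :
    (Matrix.vandermonde (fun i => xv (e i))).det =
      ∑ σ : Equiv.Perm (Fin k), Equiv.Perm.sign σ •
        mono (∑ i, ((σ i : Fin k) : ℕ) • (Pi.single (e i) 1 : Fin l → ℤ)) := by
  rw [← Matrix.det_transpose, Matrix.det_apply]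
  refine Finset.sum_congr rfl fun σ _ => ?_
  rw [mono_sum]
  congr 1
  refine Finset.prod_congr rfl fun i _ => ?_
  rw [← mono_pow]
  rfl

lemma ev_sign_smul {l : ℕ} (u : ℤˣ) (P : Laurent l) : ev (u • P) = u • ev P := by
  rw [Units.smul_def, Units.smul_def, map_zsmul]

lemma schur_expand {l : ℕ} (ρ : Fin l → ℤ) :
    schur ρ = ∑ σ : Equiv.Perm (Fin l), Equiv.Perm.sign σ •
      ∏ i, hZ (ρ i - (i.1 : ℤ) + ((σ i).1 : ℤ)) := by
  rw [schur, ← Matrix.det_transpose, Matrix.det_apply]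
  rfl

/-- The Jacobi–Trudi determinant as the value of `ev` at a shifted Vandermonde determinant. -/
lemma schur_eq_ev {l : ℕ} (ρ : Fin l → ℤ) :
    schur ρ = ev (mono (fun i => ρ i - (i.1 : ℤ)) * (Matrix.vandermonde xv).det) := by
  have h := det_vandermonde_xv (fun i : Fin l => i)
  rw [show (fun i : Fin l => xv i) = xv from rfl] at h
  rw [h, schur_expand, Finset.mul_sum, map_sum]
  refine Finset.sum_congr rfl fun σ _ => ?_
  rw [mul_smul_comm, ev_sign_smul, ← mono_add, ev_mono]
  congr 1
  refine Finset.prod_congr rfl fun i _ => ?_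
  simp [Finset.sum_apply, Pi.single_apply]

/-! ### The two blocks of variables -/

/-- The exponent vector `(λ - δ_m, μ - δ_n)`, where `δ_k = (0, 1, …, k-1)`. -/
def baseExp {m n : ℕ} (lam : Fin m → ℤ) (mu : Fin n → ℤ) : Fin (m + n) → ℤ :=
  Fin.append (fun i => lam i - (i.1 : ℤ)) (fun j => mu j - (j.1 : ℤ))

/-- The Laurent polynomial `x^{λ-δ} y^{μ-δ} V(x) V(y)`, with `V` the Vandermonde product; here `x`
is the block of the first `m` variables and `y` that of the last `n`. -/
def blockPoly {m n : ℕ} (lam : Fin m → ℤ) (mu : Fin n → ℤ) : Laurent (m + n) :=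
  mono (baseExp lam mu) *
    (Matrix.vandermonde (fun i : Fin m => (xv (Fin.castAdd n i) : Laurent (m + n)))).det *
    (Matrix.vandermonde (fun j : Fin n => (xv (Fin.natAdd m j) : Laurent (m + n)))).det

/-- The Laurent monomial `z_{ij} = x_i / y_j`. -/
def zz {m n : ℕ} (i : Fin m) (j : Fin n) : Laurent (m + n) :=
  mono (Pi.single (Fin.castAdd n i) 1 - Pi.single (Fin.natAdd m j) 1)

lemma castAdd_ne_natAdd {m n : ℕ} (i : Fin m) (j : Fin n) :
    Fin.castAdd n i ≠ Fin.natAdd m j := fun h => by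
  have h1 := congrArg Fin.val h
  have h2 := i.2
  rw [Fin.val_castAdd, Fin.val_natAdd] at h1
  omega

lemma blockPoly_expand {m n : ℕ} (lam : Fin m → ℤ) (mu : Fin n → ℤ) :
    blockPoly lam mu = ∑ σ : Equiv.Perm (Fin m), ∑ τ : Equiv.Perm (Fin n),
      (Equiv.Perm.sign σ * Equiv.Perm.sign τ) •
        mono (Fin.append (fun i => lam i - (i.1 : ℤ) + ((σ i).1 : ℤ))
          (fun j => mu j - (j.1 : ℤ) + ((τ j).1 : ℤ))) := by
  rw [blockPoly, det_vandermonde_xv, det_vandermonde_xv, mul_assoc, Finset.sum_mul_sum,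
    Finset.mul_sum]
  refine Finset.sum_congr rfl fun σ _ => ?_
  rw [Finset.mul_sum]
  refine Finset.sum_congr rfl fun τ _ => ?_
  rw [smul_mul_smul_comm, mul_smul_comm, ← mono_add, ← mono_add]
  congr 2
  funext k
  refine Fin.addCases (fun i => ?_) (fun j => ?_) k
  · simp [baseExp, Finset.sum_apply, Pi.single_apply, castAdd_ne_natAdd]
  · simp [baseExp, Finset.sum_apply, Pi.single_apply, (castAdd_ne_natAdd _ _).symm]

lemma ev_blockPoly {m n : ℕ} (lam : Fin m → ℤ) (mu : Fin n → ℤ) :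
    ev (blockPoly lam mu) = schur lam * schur mu := by
  rw [blockPoly_expand, schur_expand, schur_expand, Finset.sum_mul_sum, map_sum]
  refine Finset.sum_congr rfl fun σ _ => ?_
  rw [map_sum]
  refine Finset.sum_congr rfl fun τ _ => ?_
  rw [ev_sign_smul, ev_mono, Fin.prod_univ_add, smul_mul_smul_comm]
  simp

lemma det_vandermonde_ite {R : Type*} [CommRing R] {l : ℕ} (v : Fin l → R) :
    (Matrix.vandermonde v).det = ∏ i, ∏ j, if i < j then v j - v i else 1 := by
  rw [Matrix.det_vandermonde]
  refine Finset.prod_congr rfl fun i _ => ?_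
  rw [← Finset.prod_filter]
  congr 1
  ext j
  simp

/-- A Vandermonde determinant in two blocks of variables factors into the Vandermonde determinants
of the blocks and the product of the cross differences. -/
lemma det_vandermonde_blocks {R : Type*} [CommRing R] {m n : ℕ} (v : Fin (m + n) → R) :
    (Matrix.vandermonde v).det =
      (Matrix.vandermonde (fun i : Fin m => v (Fin.castAdd n i))).det *
      (Matrix.vandermonde (fun j : Fin n => v (Fin.natAdd m j))).det *
      ∏ i : Fin m, ∏ j : Fin n, (v (Fin.natAdd m j) - v (Fin.castAdd n i)) := by
  have h1 : ∀ (i : Fin m) (j : Fin n), Fin.castAdd n i < Fin.natAdd m j := fun i j => by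
    rw [Fin.lt_def]; simp; omega
  have h2 : ∀ (i : Fin m) (j : Fin n), ¬ Fin.natAdd m j < Fin.castAdd n i := fun i j =>
    not_lt.2 (h1 i j).le
  have h3 : ∀ i i' : Fin m, Fin.castAdd n i < Fin.castAdd n i' ↔ i < i' := fun _ _ => Iff.rfl
  rw [det_vandermonde_ite, det_vandermonde_ite, det_vandermonde_ite, Fin.prod_univ_add]
  simp only [Fin.prod_univ_add, h1, h2, h3, if_true, if_false, Finset.prod_const_one, one_mul,
    Finset.prod_mul_distrib, Fin.natAdd_lt_natAdd_iff]
  ring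

lemma xv_sub {m n : ℕ} (i : Fin m) (j : Fin n) :
    (xv (Fin.natAdd m j) - xv (Fin.castAdd n i) : Laurent (m + n)) =
      xv (Fin.natAdd m j) * (1 - zz i j) := by
  rw [mul_sub, mul_one, zz, xv, ← mono_add, add_sub_cancel]
  rfl

lemma prod_xv {m n : ℕ} :
    ∏ _i : Fin m, ∏ j : Fin n, (xv (Fin.natAdd m j) : Laurent (m + n)) =
      mono (Fin.append (0 : Fin m → ℤ) (fun _ => (m : ℤ))) := by
  simp only [xv, ← mono_sum]
  congr 1
  funext k
  refine Fin.addCases (fun i => ?_) (fun j => ?_) k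
  · simp [Finset.sum_apply, castAdd_ne_natAdd]
  · simp [Finset.sum_apply, Pi.single_apply]

lemma prod_zz_pow {m n : ℕ} (A : Fin m → Fin n → ℕ) :
    ∏ i, ∏ j, (zz i j : Laurent (m + n)) ^ A i j =
      mono (Fin.append (fun i => ((∑ j, A i j : ℕ) : ℤ)) (fun j => -((∑ i, A i j : ℕ) : ℤ))) := by
  simp only [zz, mono_pow, ← mono_sum]
  congr 1
  funext k
  refine Fin.addCases (fun i => ?_) (fun j => ?_) k
  · simp [Finset.sum_apply, Pi.single_apply, castAdd_ne_natAdd]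
  · simp [Finset.sum_apply, Pi.single_apply, (castAdd_ne_natAdd _ _).symm]

/-- The summand attached to a single matrix `A`. -/
lemma schur_append {m n : ℕ} (lam : Fin m → ℤ) (mu : Fin n → ℤ) (A : Fin m → Fin n → ℕ) :
    schur (Fin.append (fun i => lam i + ((∑ j, A i j : ℕ) : ℤ))
        (fun j => mu j - ((∑ i, A i j : ℕ) : ℤ))) =
      ev (blockPoly lam mu * (∏ i, ∏ j, (1 - zz i j)) * ∏ i, ∏ j, zz i j ^ A i j) := by
  rw [schur_eq_ev, det_vandermonde_blocks]
  simp only [xv_sub, Finset.prod_mul_distrib]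
  rw [prod_xv, prod_zz_pow, blockPoly]
  have h : (mono (fun k : Fin (m + n) => Fin.append (fun i => lam i + ((∑ j, A i j : ℕ) : ℤ))
        (fun j => mu j - ((∑ i, A i j : ℕ) : ℤ)) k - (k.1 : ℤ)) : Laurent (m + n)) *
        mono (Fin.append (0 : Fin m → ℤ) (fun _ => (m : ℤ))) =
      mono (baseExp lam mu) *
        mono (Fin.append (fun i => ((∑ j, A i j : ℕ) : ℤ))
          (fun j => -((∑ i, A i j : ℕ) : ℤ))) := by
    rw [← mono_add, ← mono_add]
    congr 1
    funext k
    refine Fin.addCases (fun i => ?_) (fun j => ?_) k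
    · simp [baseExp]; ring
    · simp [baseExp]; ring
  congr 1
  linear_combination
    ((Matrix.vandermonde (fun i : Fin m => (xv (Fin.castAdd n i) : Laurent (m + n)))).det *
    (Matrix.vandermonde (fun j : Fin n => (xv (Fin.natAdd m j) : Laurent (m + n)))).det *
    ∏ i : Fin m, ∏ j : Fin n, (1 - zz i j)) * h

/-! ### Truncation of the geometric series -/

/-- The Laurent polynomials whose monomials all have exponent less than `B` at the variable `k`. -/
def expLT {l : ℕ} (k : Fin l) (B : ℤ) : AddSubgroup (Laurent l) :=
  AddSubgroup.closure {P | ∃ a : Fin l → ℤ, a k < B ∧ P = mono a}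

lemma mono_mem_expLT {l : ℕ} {k : Fin l} {B : ℤ} {a : Fin l → ℤ} (h : a k < B) :
    mono a ∈ expLT k B :=
  AddSubgroup.subset_closure ⟨a, h, rfl⟩

lemma mul_mono_mem_expLT {l : ℕ} {k : Fin l} {B C : ℤ} {a : Fin l → ℤ} (h : B + a k ≤ C)
    {P : Laurent l} (hP : P ∈ expLT k B) : P * mono a ∈ expLT k C := by
  have hle : expLT k B ≤ (expLT k C).comap (AddMonoidHom.mulRight (mono a)) := by
    refine (AddSubgroup.closure_le _).2 ?_
    rintro _ ⟨b, hb, rfl⟩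
    change mono b * mono a ∈ expLT k C
    rw [← mono_add]
    refine mono_mem_expLT ?_
    rw [Pi.add_apply]
    omega
  exact hle hP

/-- A monomial with a negative exponent is killed by `ev`, as `h_k = 0` for `k < 0`. -/
lemma ev_eq_zero {l : ℕ} {k : Fin l} {P : Laurent l} (hP : P ∈ expLT k 0) : ev P = 0 := by
  have hle : expLT k 0 ≤ (ev (l := l)).ker := by
    refine (AddSubgroup.closure_le _).2 ?_
    rintro _ ⟨a, ha, rfl⟩
    change ev (mono a) = 0
    rw [ev_mono]
    exact Finset.prod_eq_zero (Finset.mem_univ k) (by rw [hZ, if_neg (not_le.2 ha)])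
  exact hle hP

/-- If all exponents of `P` at the `y`-variables are less than `K`, the factors `1 - z_{ij}^K` are
invisible to `ev`: multiplying by `z_{ij}^K` makes the exponent at `y_j` negative, and no
`z_{i'j'}` increases it again. -/
lemma ev_mul_prod {m n : ℕ} (K : ℕ) (P : Laurent (m + n))
    (hP : ∀ j : Fin n, P ∈ expLT (Fin.natAdd m j) K) (s : Finset (Fin m × Fin n)) :
    (∀ j : Fin n, P * ∏ p ∈ s, (1 - zz p.1 p.2 ^ K) ∈ expLT (Fin.natAdd m j) K) ∧
      ev (P * ∏ p ∈ s, (1 - zz p.1 p.2 ^ K)) = ev P := by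
  induction s using Finset.induction_on with
  | empty => simpa using hP
  | insert p s hp ih =>
    obtain ⟨ih1, ih2⟩ := ih
    set Q := P * ∏ p ∈ s, (1 - zz p.1 p.2 ^ K) with hQ
    have hstep : P * ∏ p ∈ insert p s, (1 - zz p.1 p.2 ^ K) = Q - Q * zz p.1 p.2 ^ K := by
      rw [Finset.prod_insert hp, hQ]; ring
    have hne : ∀ j : Fin n, Fin.natAdd m j ≠ Fin.castAdd n p.1 := fun j =>
      (castAdd_ne_natAdd p.1 j).symm
    rw [hstep]
    refine ⟨fun j => AddSubgroup.sub_mem _ (ih1 j) ?_, ?_⟩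
    · rw [zz, mono_pow]
      refine mul_mono_mem_expLT ?_ (ih1 j)
      rw [Pi.smul_apply, Pi.sub_apply, Pi.single_eq_of_ne (hne j), Pi.single_apply]
      split_ifs <;> simp
    · rw [map_sub, ih2, sub_eq_self]
      refine ev_eq_zero (k := Fin.natAdd m p.2) ?_
      rw [zz, mono_pow]
      refine mul_mono_mem_expLT ?_ (ih1 p.2)
      rw [Pi.smul_apply, Pi.sub_apply, Pi.single_eq_of_ne (hne p.2), Pi.single_eq_same]
      simp

lemma blockPoly_mem {m n : ℕ} (lam : Fin m → ℤ) (mu : Fin n → ℤ) (j : Fin n) (B : ℤ)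
    (hB : mu j + (n : ℤ) - 1 - (j.1 : ℤ) < B) :
    blockPoly lam mu ∈ expLT (Fin.natAdd m j) B := by
  rw [blockPoly_expand]
  refine AddSubgroup.sum_mem _ fun σ _ => AddSubgroup.sum_mem _ fun τ _ => ?_
  rw [Units.smul_def]
  refine AddSubgroup.zsmul_mem _ (mono_mem_expLT ?_) _
  rw [Fin.append_right]
  have := (τ j).2
  omega

/-- The `m × n` matrices with natural entries less than `K`. -/
def box (m n K : ℕ) : Finset (Fin m → Fin n → ℕ) :=
  Fintype.piFinset fun _ => Fintype.piFinset fun _ => Finset.range K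

lemma sum_box {m n : ℕ} (K : ℕ) :
    (∏ i, ∏ j, (1 - zz i j : Laurent (m + n))) * ∑ A ∈ box m n K, ∏ i, ∏ j, zz i j ^ A i j =
      ∏ p : Fin m × Fin n, (1 - zz p.1 p.2 ^ K) := by
  have h : ∑ A ∈ box m n K, ∏ i, ∏ j, (zz i j : Laurent (m + n)) ^ A i j =
      ∏ i, ∏ j, ∑ a ∈ Finset.range K, (zz i j : Laurent (m + n)) ^ a := by
    simp only [Finset.prod_univ_sum, box]
  rw [h, ← Finset.prod_mul_distrib, Fintype.prod_prod_type]
  refine Finset.prod_congr rfl fun i _ => ?_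
  rw [← Finset.prod_mul_distrib]
  exact Finset.prod_congr rfl fun j _ => mul_neg_geom_sum _ _

/-- The product rule as a finite sum over matrices, valid for arbitrary integer tuples. -/
lemma schur_mul_schur {m n : ℕ} (lam : Fin m → ℤ) (mu : Fin n → ℤ) (K : ℕ)
    (hK : ∀ j, mu j + (n : ℤ) - 1 - (j.1 : ℤ) < K) :
    schur lam * schur mu = ∑ A ∈ box m n K,
      schur (Fin.append (fun i => lam i + ((∑ j, A i j : ℕ) : ℤ))
        (fun j => mu j - ((∑ i, A i j : ℕ) : ℤ))) := by
  simp only [schur_append]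
  rw [← map_sum, ← Finset.mul_sum, mul_assoc, sum_box,
    (ev_mul_prod K _ (fun j => blockPoly_mem lam mu j K (hK j)) Finset.univ).2, ev_blockPoly]

/-- If an entry of the second block is too negative, a row of the Jacobi–Trudi matrix vanishes. -/
lemma schur_append_eq_zero {m n : ℕ} (a : Fin m → ℤ) (b : Fin n → ℤ) (j : Fin n)
    (h : b j + (n : ℤ) - 1 - (j.1 : ℤ) < 0) : schur (Fin.append a b) = 0 := by
  refine Matrix.det_eq_zero_of_row_eq_zero (Fin.natAdd m j) fun k => ?_
  rw [Matrix.of_apply, Fin.append_right, hZ, if_neg]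
  have := k.2
  rw [Fin.val_natAdd]
  push_cast
  omega

/-- the Littlewood–Richardson rule in integral-matrix form.  For partitions
`λ = (λ₁ ≥ … ≥ λ_m ≥ 0)` and `μ = (μ₁ ≥ … ≥ μ_n ≥ 0)`:
`s_λ · s_μ = ∑_{M,N} C_{M,N} · s_{(λ+M, μ−N)}`, the sum ranging over all pairs
`M ∈ ℕ^m`, `N ∈ ℕ^n`, where `C_{M,N}` is the number of `m×n` matrices with nonnegative
integer entries with row sums `M` and column sums `N`, and `(λ+M, μ−N) ∈ ℤ^{m+n}` is the
juxtaposed tuple.  All but finitely many summands vanish; in fact every summand with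
`N_j > μ_j + n − j` for some `j` is zero. -/
theorem littlewood_richardson_integral_matrix (m n : ℕ)
    (lam : Fin m → ℕ) (mu : Fin n → ℕ) (hlam : Antitone lam) (hmu : Antitone mu) :
    let f : ((Fin m → ℕ) × (Fin n → ℕ)) → Lam := fun MN =>
      ((Set.ncard {A : Matrix (Fin m) (Fin n) ℕ |
          (∀ i, ∑ j, A i j = MN.1 i) ∧ (∀ j, ∑ i, A i j = MN.2 j)} : ℚ)) •
        schur (Fin.append (fun i => (lam i : ℤ) + (MN.1 i : ℤ))
          (fun j => (mu j : ℤ) - (MN.2 j : ℤ)))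
    (Function.support f).Finite ∧
    schur (fun i => (lam i : ℤ)) * schur (fun j => (mu j : ℤ)) = (∑ᶠ MN, f MN) ∧
    ∀ MN : (Fin m → ℕ) × (Fin n → ℕ),
      (∃ j : Fin n, (mu j : ℤ) + (n : ℤ) - 1 - (j.1 : ℤ) < (MN.2 j : ℤ)) → f MN = 0 := by
  intro f
  set rc : (Fin m → Fin n → ℕ) → (Fin m → ℕ) × (Fin n → ℕ) :=
    fun A => (fun i => ∑ j, A i j, fun j => ∑ i, A i j) with hrc
  set g : (Fin m → ℕ) × (Fin n → ℕ) → Lam := fun MN =>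
    schur (Fin.append (fun i => (lam i : ℤ) + (MN.1 i : ℤ))
      (fun j => (mu j : ℤ) - (MN.2 j : ℤ))) with hg
  have hg0 : ∀ MN : (Fin m → ℕ) × (Fin n → ℕ),
      (∃ j : Fin n, (mu j : ℤ) + (n : ℤ) - 1 - (j.1 : ℤ) < (MN.2 j : ℤ)) → g MN = 0 := by
    rintro MN ⟨j, hj⟩
    exact schur_append_eq_zero _ _ j (by omega)
  obtain ⟨K, hK⟩ : ∃ K : ℕ, ∀ j, (mu j : ℤ) + (n : ℤ) - 1 - (j.1 : ℤ) < K := by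
    refine ⟨(∑ j, mu j) + n, fun j => ?_⟩
    have := Finset.single_le_sum (f := mu) (fun i _ => Nat.zero_le _) (Finset.mem_univ j)
    push_cast
    zify at this
    omega
  -- Where the Schur function does not vanish, the column sums, hence all entries, are less than `K`.
  have hcoef : ∀ MN, g MN ≠ 0 →
      {A : Fin m → Fin n → ℕ |
        (∀ i, ∑ j, A i j = MN.1 i) ∧ (∀ j, ∑ i, A i j = MN.2 j)} =
      (((box m n K).filter fun A => rc A = MN : Finset (Fin m → Fin n → ℕ)) :
        Set (Fin m → Fin n → ℕ)) := by
    intro MN hMN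
    ext A
    rw [Finset.mem_coe, Finset.mem_filter]
    simp only [Set.mem_ofPred_eq, hrc, Prod.ext_iff, funext_iff]
    refine ⟨fun h => ⟨?_, h⟩, fun h => h.2⟩
    refine Fintype.mem_piFinset.2 fun i => Fintype.mem_piFinset.2 fun j => Finset.mem_range.2 ?_
    by_contra hlt
    refine hMN (hg0 MN ⟨j, ?_⟩)
    have h1 := Finset.single_le_sum (f := fun i => A i j) (fun i _ => Nat.zero_le _)
      (Finset.mem_univ i)
    have h2 := h.2 j
    have h3 := hK j
    omega
  have hf : ∀ MN, f MN = ((box m n K).filter fun A => rc A = MN).card • g MN := by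
    intro MN
    change ((Set.ncard {A : Fin m → Fin n → ℕ |
      (∀ i, ∑ j, A i j = MN.1 i) ∧ (∀ j, ∑ i, A i j = MN.2 j)} : ℕ) : ℚ) • g MN = _
    by_cases hMN : g MN = 0
    · simp [hMN]
    · rw [hcoef MN hMN, Set.ncard_coe_finset, Nat.cast_smul_eq_nsmul]
  have hsupp : Function.support f ⊆ ((box m n K).image rc : Finset _) := by
    intro MN hMN
    rw [Function.mem_support, hf] at hMN
    have hne : ((box m n K).filter fun A => rc A = MN).card ≠ 0 := fun h => hMN (by simp [h])
    obtain ⟨A, hA⟩ := Finset.card_ne_zero.1 hne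
    rw [Finset.mem_filter] at hA
    exact Finset.mem_coe.2 (Finset.mem_image.2 ⟨A, hA.1, hA.2⟩)
  refine ⟨(Finset.finite_toSet _).subset hsupp, ?_, ?_⟩
  · rw [finsum_eq_sum_of_support_subset f hsupp,
      schur_mul_schur (fun i => (lam i : ℤ)) (fun j => (mu j : ℤ)) K hK]
    simp only [hf]
    rw [← Finset.sum_comp g rc]
  · intro MN h
    rw [hf, hg0 MN h, smul_zero]
end
end

section
/- Let k ≥ 1 and expand the polynomial P := ∏_{1≤i<j≤k}(z_i − q·z_j) = ∑_γ a_γ(q)·z^γ in ℤ[q][z₁,…,z_k]. Then: (i) for every permutation w ∈ S_k, the coefficient of z^{w(δ)} is a_{w(δ)}(q) = (−q)^{ℓ(w)}; (ii) every exponent tuple γ with a_γ ≠ 0 that is not of the form w(δ) for some w ∈ S_k has two equal coordinates, and its coefficient satisfies a_γ(1) = 0. -/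
/-!
The monomials `z^{w(δ)}` are the vertices of the Newton polytope of `P`. Renaming the variables
along `w` turns `z^{w(δ)}` into `z^δ`, the lexicographically leading monomial of the renamed
product, whose coefficient is the product of the leading coefficients of the factors: a factor
`z_{w i} - q z_{w j}` with `i < j` contributes `1` if `w i < w j` and `-q` if `(i, j)` is an
inversion of `w`. This gives (i); see `qVand_coeff_perm`.

For (ii), each variable occurs in exactly `k - 1` factors, so every exponent in the support of `P`
has coordinates at most `k - 1` (`qVand_exponent_le`); if these are pairwise distinct, the exponent
is a rearrangement of `δ`. If instead two coordinates `i ≠ j` of `γ` agree, specialize `q = 1`: then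
`P` becomes a Vandermonde determinant, which changes sign under `z_i ↔ z_j`, whereas the coefficient
of `z^γ` is unchanged, so it vanishes (`qVand_eval_one`).
-/

open MvPolynomial

noncomputable section

/-- The number of inversions of a permutation `w` of `Fin k`. -/
def inversions {k : ℕ} (w : Equiv.Perm (Fin k)) : ℕ :=
  (Finset.univ.filter fun p : Fin k × Fin k => p.1 < p.2 ∧ w p.2 < w p.1).card

/-- The product `∏_{i<j} (z_i - q z_j)`. -/
def qVand (k : ℕ) : MvPolynomial (Fin k) (Polynomial ℤ) :=
  ∏ p ∈ Finset.univ.filter (fun p : Fin k × Fin k => p.1 < p.2),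
    (X p.1 - MvPolynomial.C Polynomial.X * X p.2)

lemma lex_degree_C_mul_X {k : ℕ} (b : Fin k) {c : Polynomial ℤ} (hc : c ≠ 0) :
    MonomialOrder.lex.degree (C c * X b : MvPolynomial (Fin k) (Polynomial ℤ))
      = Finsupp.single b 1 := by
  classical
  rw [C_mul_X_eq_monomial, MonomialOrder.degree_monomial, if_neg hc]

/-- In the lexicographic order the variable of smaller index is the larger one, so it leads the
binomial `z_a - q z_b`. -/
lemma lex_factor {k : ℕ} {a b : Fin k} (hab : a ≠ b) :
    MonomialOrder.lex.degree (X a - C Polynomial.X * X b : MvPolynomial (Fin k) (Polynomial ℤ))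
        = Finsupp.single (min a b) 1 ∧
      MonomialOrder.lex.leadingCoeff
        (X a - C Polynomial.X * X b : MvPolynomial (Fin k) (Polynomial ℤ))
        = if b < a then -Polynomial.X else 1 := by
  have hX : (-Polynomial.X : Polynomial ℤ) ≠ 0 := neg_ne_zero.mpr Polynomial.X_ne_zero
  have e : (X a - C Polynomial.X * X b : MvPolynomial (Fin k) (Polynomial ℤ))
      = X a + C (-Polynomial.X) * X b := by
    rw [C_neg]; ring
  rw [e]
  rcases lt_or_gt_of_ne hab with h | h
  · have hlt : MonomialOrder.lex.toSyn (MonomialOrder.lex.degree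
          (C (-Polynomial.X) * X b : MvPolynomial (Fin k) (Polynomial ℤ)))
        < MonomialOrder.lex.toSyn (MonomialOrder.lex.degree
          (X a : MvPolynomial (Fin k) (Polynomial ℤ))) := by
      rw [lex_degree_C_mul_X b hX, MonomialOrder.degree_X, MonomialOrder.lex_lt_iff]
      exact Finsupp.Lex.single_lt_iff.mpr h
    rw [MonomialOrder.degree_add_of_lt hlt, MonomialOrder.leadingCoeff_add_of_lt hlt,
      MonomialOrder.degree_X, MonomialOrder.leadingCoeff_X, min_eq_left h.le, if_neg h.not_gt]
    exact ⟨rfl, rfl⟩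
  · have hlt : MonomialOrder.lex.toSyn (MonomialOrder.lex.degree
          (X a : MvPolynomial (Fin k) (Polynomial ℤ)))
        < MonomialOrder.lex.toSyn (MonomialOrder.lex.degree
          (C (-Polynomial.X) * X b : MvPolynomial (Fin k) (Polynomial ℤ))) := by
      rw [lex_degree_C_mul_X b hX, MonomialOrder.degree_X, MonomialOrder.lex_lt_iff]
      exact Finsupp.Lex.single_lt_iff.mpr h
    rw [add_comm, MonomialOrder.degree_add_of_lt hlt, MonomialOrder.leadingCoeff_add_of_lt hlt,
      lex_degree_C_mul_X b hX, C_mul_X_eq_monomial, MonomialOrder.leadingCoeff_monomial,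
      min_eq_right h.le, if_pos h]
    exact ⟨rfl, rfl⟩

/-- Exactly `k - 1 - w i` pairs have `w i` as the smaller of their two images: the other image is
any element above `w i`. -/
lemma card_min_eq {k : ℕ} (w : Equiv.Perm (Fin k)) (i : Fin k) :
    ((Finset.univ.filter (fun p : Fin k × Fin k => p.1 < p.2)).filter
      (fun p => min (w p.1) (w p.2) = w i)).card = k - 1 - (w i).1 := by
  rw [← Fin.card_Ioi]
  refine Finset.card_nbij' (fun p => max (w p.1) (w p.2))
    (fun c => (min i (w.symm c), max i (w.symm c))) ?_ ?_ ?_ ?_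
  · rintro ⟨a, b⟩ h
    simp only [Finset.coe_filter, Finset.mem_filter, Finset.mem_univ, true_and,
      Set.mem_ofPred_eq, Finset.coe_Ioi, Set.mem_Ioi] at h ⊢
    have : w a ≠ w b := w.injective.ne h.1.ne
    rw [← h.2]
    exact min_lt_max.mpr this
  · intro c h
    simp only [Finset.coe_filter, Finset.mem_filter, Finset.mem_univ, true_and,
      Set.mem_ofPred_eq, Finset.coe_Ioi, Set.mem_Ioi] at h ⊢
    have hne : i ≠ w.symm c := by
      rintro rfl
      simp at h
    refine ⟨min_lt_max.mpr hne, ?_⟩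
    rcases le_total i (w.symm c) with h' | h' <;> simp [h', h.le]
  · rintro ⟨a, b⟩ h
    simp only [Finset.coe_filter, Finset.mem_filter, Finset.mem_univ, true_and,
      Set.mem_ofPred_eq] at h ⊢
    obtain ⟨h1, h2⟩ := h
    rcases le_total (w a) (w b) with h' | h'
    · rw [min_eq_left h'] at h2
      obtain rfl := w.injective h2
      simp [h', h1.le]
    · rw [min_eq_right h'] at h2
      obtain rfl := w.injective h2
      simp [h', h1.le]
  · intro c h
    simp only [Finset.coe_Ioi, Set.mem_Ioi] at h ⊢
    rcases le_total i (w.symm c) with h' | h' <;> simp [h', h.le]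

lemma qVand_coeff_perm {k : ℕ} (w : Equiv.Perm (Fin k)) :
    (qVand k).coeff (Finsupp.equivFunOnFinite.symm fun i : Fin k => k - 1 - (w i).1)
      = (-Polynomial.X) ^ inversions w := by
  classical
  rw [← coeff_rename_mapDomain w w.injective]
  have hP : rename w (qVand k) = ∏ p ∈ Finset.univ.filter (fun p : Fin k × Fin k => p.1 < p.2),
      (X (w p.1) - C Polynomial.X * X (w p.2) : MvPolynomial (Fin k) (Polynomial ℤ)) := by
    simp [qVand, map_prod]
  have hne : ∀ p ∈ Finset.univ.filter (fun p : Fin k × Fin k => p.1 < p.2), w p.1 ≠ w p.2 := by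
    intro p hp
    exact w.injective.ne (Finset.mem_filter.mp hp).2.ne
  have hδ : Finsupp.mapDomain w
        (Finsupp.equivFunOnFinite.symm fun i : Fin k => k - 1 - (w i).1)
      = ∑ p ∈ Finset.univ.filter (fun p : Fin k × Fin k => p.1 < p.2),
        MonomialOrder.lex.degree
          (X (w p.1) - C Polynomial.X * X (w p.2) : MvPolynomial (Fin k) (Polynomial ℤ)) := by
    rw [Finset.sum_congr rfl fun p hp => (lex_factor (hne p hp)).1]
    ext a
    obtain ⟨i, rfl⟩ := w.surjective a
    rw [Finsupp.mapDomain_apply w.injective, Finsupp.finsetSum_apply]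
    simp only [Finsupp.single_apply, Finset.sum_boole]
    exact (card_min_eq w i).symm
  rw [hP, hδ, MonomialOrder.coeff_prod_sum_degree,
    Finset.prod_congr rfl fun p hp => (lex_factor (hne p hp)).2, Finset.prod_ite,
    Finset.prod_const, Finset.prod_const_one, mul_one, Finset.filter_filter]
  rfl

/-- Each variable occurs in only `k - 1` of the factors. -/
lemma qVand_exponent_le {k : ℕ} (γ : Fin k →₀ ℕ) (h : (qVand k).coeff γ ≠ 0) (i : Fin k) :
    γ i ≤ k - 1 := by
  classical
  refine degreeOf_le_iff.mp ?_ γ (mem_support_iff.mpr h)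
  refine (degreeOf_prod_le _ _ _).trans ?_
  have hfac : ∀ p ∈ Finset.univ.filter (fun p : Fin k × Fin k => p.1 < p.2),
      degreeOf i (X p.1 - C Polynomial.X * X p.2 : MvPolynomial (Fin k) (Polynomial ℤ))
        ≤ if i = p.1 ∨ i = p.2 then 1 else 0 := by
    intro p _
    refine (degreeOf_sub_le _ _ _).trans (max_le ?_ ((degreeOf_C_mul_le _ _ _).trans ?_)) <;>
      rw [degreeOf_X] <;> split_ifs <;> simp_all
  refine (Finset.sum_le_sum hfac).trans ?_
  rw [Finset.sum_boole, Nat.cast_id]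
  have hc : (Finset.univ.erase i).card = k - 1 := by simp
  rw [← hc]
  refine Finset.card_le_card_of_injOn (fun p => if i = p.1 then p.2 else p.1) ?_ ?_
  · rintro ⟨a, b⟩ hp
    simp only [Finset.coe_filter, Finset.mem_filter, Finset.mem_univ, true_and,
      Set.mem_ofPred_eq] at hp
    simp only [Finset.coe_erase, Finset.coe_univ, Set.mem_sdiff, Set.mem_univ, true_and,
      Set.mem_singleton_iff]
    grind
  · rintro ⟨a, b⟩ hp ⟨c, d⟩ hq
    simp only [Finset.coe_filter, Finset.mem_filter, Finset.mem_univ, true_and,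
      Set.mem_ofPred_eq] at hp hq
    grind

/-- At `q = 1` the product is the Vandermonde determinant in the variables `-z_i`. -/
lemma map_qVand (k : ℕ) :
    map (Polynomial.evalRingHom 1) (qVand k)
      = (Matrix.vandermonde fun i : Fin k => (-X i : MvPolynomial (Fin k) ℤ)).det := by
  rw [Matrix.det_vandermonde, qVand, map_prod, Finset.prod_sigma']
  refine Finset.prod_bij' (fun p _ => ⟨p.1, p.2⟩) (fun p _ => (p.1, p.2)) ?_ ?_ ?_ ?_ ?_ <;>
    simp
  intros
  ring

lemma qVand_eval_one {k : ℕ} (γ : Fin k →₀ ℕ) {i j : Fin k} (hij : i ≠ j) (h : γ i = γ j) :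
    Polynomial.eval 1 ((qVand k).coeff γ) = 0 := by
  classical
  set V : Matrix (Fin k) (Fin k) (MvPolynomial (Fin k) ℤ) :=
    Matrix.vandermonde fun i : Fin k => (-X i : MvPolynomial (Fin k) ℤ) with hV
  have h1 : Polynomial.eval 1 ((qVand k).coeff γ) = V.det.coeff γ := by
    rw [hV, ← map_qVand, coeff_map, Polynomial.coe_evalRingHom]
  have hren : rename (Equiv.swap i j) V.det = -V.det := by
    have e : (rename (Equiv.swap i j)).mapMatrix V = V.submatrix (Equiv.swap i j) id := by
      ext a b
      simp [hV, Matrix.vandermonde_apply]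
    rw [AlgHom.map_det, e, Matrix.det_permute, Equiv.Perm.sign_swap hij]
    simp
  have hγ : γ.mapDomain (Equiv.swap i j) = γ := by
    ext a
    rw [Finsupp.mapDomain_equiv_apply, Equiv.symm_swap, Equiv.swap_apply_def]
    split_ifs with h1 h2
    · rw [h1, h]
    · rw [h2, h]
    · rfl
  have h2 := coeff_rename_mapDomain _ (Equiv.swap i j).injective V.det γ
  rw [hγ, hren, coeff_neg] at h2
  rw [h1]
  omega

/-- expand `P := ∏_{1≤i<j≤k} (z_i − q·z_j) = ∑_γ a_γ(q)·z^γ` in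
`ℤ[q][z₁,…,z_k]`, and let `δ := (k−1, k−2, …, 1, 0)`.  Then:
(i) for every `w ∈ S_k`, the coefficient of `z^{w(δ)}` is `a_{w(δ)}(q) = (−q)^{ℓ(w)}`;
(ii) every exponent tuple `γ` with `a_γ ≠ 0` that is not of the form `w(δ)` has two
equal coordinates, and its coefficient satisfies `a_γ(1) = 0`. -/
theorem q_vandermonde_expansion (k : ℕ) (hk : 1 ≤ k) :
    let P : MvPolynomial (Fin k) (Polynomial ℤ) :=
      ∏ p ∈ Finset.univ.filter (fun p : Fin k × Fin k => p.1 < p.2),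
        (X p.1 - MvPolynomial.C Polynomial.X * X p.2)
    (∀ w : Equiv.Perm (Fin k),
      P.coeff (Finsupp.equivFunOnFinite.symm fun i : Fin k => k - 1 - (w i).1)
        = (-Polynomial.X) ^ inversions w) ∧
    (∀ γ : Fin k → ℕ,
      P.coeff (Finsupp.equivFunOnFinite.symm γ) ≠ 0 →
      (∀ w : Equiv.Perm (Fin k), γ ≠ fun i => k - 1 - (w i).1) →
      (∃ i j : Fin k, i ≠ j ∧ γ i = γ j) ∧
        Polynomial.eval 1 (P.coeff (Finsupp.equivFunOnFinite.symm γ)) = 0) := by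
  intro P
  change (∀ w : Equiv.Perm (Fin k), (qVand k).coeff _ = _) ∧
    (∀ γ : Fin k → ℕ, (qVand k).coeff _ ≠ 0 → _ → _ ∧ Polynomial.eval 1 ((qVand k).coeff _) = 0)
  refine ⟨qVand_coeff_perm, fun γ hγ hw => ?_⟩
  have hex : ∃ i j : Fin k, i ≠ j ∧ γ i = γ j := by
    by_contra! hinj
    have hle : ∀ i, γ i ≤ k - 1 := fun i => qVand_exponent_le _ hγ i
    -- The candidate permutation sends `i` to the position `k - 1 - γ i` of the value `γ i` in `δ`.
    let f : Fin k → Fin k := fun i => ⟨k - 1 - γ i, by omega⟩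
    have hf : Function.Injective f := by
      intro a b hab
      by_contra hne
      have h1 := hinj a b hne
      have h2 := hle a
      have h3 := hle b
      have h4 : k - 1 - γ a = k - 1 - γ b := congrArg Fin.val hab
      omega
    refine hw (Equiv.ofBijective f (Finite.injective_iff_bijective.mp hf)) (funext fun i => ?_)
    have h2 := hle i
    change γ i = k - 1 - (k - 1 - γ i)
    omega
  obtain ⟨i, j, hij, h⟩ := hex
  exact ⟨⟨i, j, hij, h⟩, qVand_eval_one _ hij h⟩
end
end

section
/- The components of the Drinfeld currents satisfy the quadratic (Serre-type) relations: for all m, n ∈ ℤ and both choices of sign, as F-linear endomorphisms of W_i (i ∈ {0,1}): X_m^± X_n^± − q^{±2} X_n^± X_m^± = q^{±2} X_{m−1}^± X_{n+1}^± − X_{n+1}^± X_{m−1}^±. -/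
/-!
On one lattice component `e^{kα}`, the current component `X_n^±` is a coefficient
`V_a = ∑_j E_{j−a} A_j` of `E(z) A(z^{−1})`, where `E(w) = exp (∑ c_n p_n wⁿ/n)` acts by
multiplication and `A(u) = exp (∑ d_n uⁿ ∂/∂p_n)` is the translation `p_n ↦ p_n + d_n uⁿ`
(`AF_X_mul`). For both signs `c_n d_n = −(1 + sⁿ)`, with `s = q^{∓2}`, whence
`A(u) E(w) = (1 − uw)(1 − s·uw) E(w) A(u)` (`AF_EF`). Therefore
`V_a V_b = N(a,b) − (1+s) N(a−1,b+1) + s N(a−2,b+2)` (`VF_VF`), where the coefficients `N(a,b)` of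
the normally ordered product are symmetric in `a` and `b`. Passing through `e^{±α}` raises the
index `a` by `2`, and the relation becomes
`V_{a+2} V_b − t V_{b+2} V_a = t V_{a+1} V_{b+1} − V_{b+3} V_{a−1}` with `t = s⁻¹ = q^{±2}`: after
expansion both sides equal `(t−s)(N(a+1,b+1) − N(a,b+2))` (`VF_quadratic`).

The families `E`, `A` are handled through the recursions obtained by differentiating the
exponentials, with indices in `ℤ` and vanishing terms at negative indices, so that index shifts
need no case distinctions. All sums are finite because `A_j P = 0` once `j` exceeds the weighted
degree of `P` (`AF_wbound`).
-/

open MvPolynomial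

noncomputable section

/-- The base field `F = ℚ(q)`. -/
abbrev Fq : Type := RatFunc ℚ

/-- The indeterminate `q ∈ ℚ(q)`. -/
def qq : Fq := RatFunc.X

/-- `Λ_F = F[p₁,p₂,…]`, with the variable `X n` (for `n : ℕ+`) the power sum `p_n`. -/
abbrev LamF : Type := MvPolynomial ℕ+ Fq

/-- The power sum `p_n`. -/
def ppF (n : ℕ+) : LamF := X n

/-- The family `g` with generating function `∑_k g_k t^k = exp (∑_{n≥1} c n · p_n tⁿ/n)`,
characterized by `g 0 = 1` and the recursion obtained by differentiating:
`(k+1) · g (k+1) = ∑_{i=0}^{k} c (i+1) · p_{i+1} · g (k−i)`. -/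
def genFamF (c : ℕ → Fq) : ℕ → LamF
  | 0 => 1
  | (k+1) => (((k : Fq) + 1)⁻¹) •
      ∑ i ∈ Finset.range (k+1), c (i+1) • (ppF ⟨i+1, Nat.succ_pos i⟩ * genFamF c (k - i))
  decreasing_by exact Nat.lt_succ_of_le (Nat.sub_le k i)

/-- The complete homogeneous symmetric function `h_k`. -/
def hhF : ℕ → LamF := genFamF fun _ => 1

/-- The elementary symmetric function `e_k`. -/
def eeF : ℕ → LamF := genFamF fun n => (-1)^(n+1)

/-- `h` indexed by `ℤ` (zero in negative degrees). -/
def hZF (n : ℤ) : LamF := if 0 ≤ n then hhF n.toNat else 0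

/-- `e` indexed by `ℤ` (zero in negative degrees). -/
def eZF (n : ℤ) : LamF := if 0 ≤ n then eeF n.toNat else 0

/-- The creation coefficients of `X⁺(z)`:
`exp (∑ ((1+q^{2n})q^{−n}/n)·p_n·zⁿ) = ∑_k HpF k · z^k`. -/
def HpF : ℕ → LamF := genFamF fun n => (1 + qq ^ (2*n)) * (qq⁻¹) ^ n

/-- `HpF` indexed by `ℤ`. -/
def HZp (n : ℤ) : LamF := if 0 ≤ n then HpF n.toNat else 0

/-- The annihilation avatars for `X⁺(z)`: since
`(1+q^{2n})q^{−n}/n · a_n = q^{−n}·∂/∂p_n`, the coefficient of `z^{−j}` in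
`exp (−∑ ((1+q^{2n})q^{−n}/n)·a_n·z^{−n})` is `ApF j` with `p_i ↦ i·∂/∂p_i`
substituted, where `∑_k ApF k t^k = exp (−∑ q^{−n} p_n tⁿ/n)`. -/
def ApF : ℕ → LamF := genFamF fun n => -((qq⁻¹) ^ n)

/-- The creation coefficients of `X⁻(z)`:
`exp (−∑ ((1+q^{2n})/n)·p_n·zⁿ) = ∑_k HmF k · z^k`. -/
def HmF : ℕ → LamF := genFamF fun n => -(1 + qq ^ (2*n))

/-- `HmF` indexed by `ℤ`. -/
def HZm (n : ℤ) : LamF := if 0 ≤ n then HmF n.toNat else 0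

/-- The differential operator `∏_i (i·∂/∂p_i)^(α i)`. -/
def monOpF (α : ℕ+ →₀ ℕ) : Module.End Fq LamF :=
  ((α.support.sort (· ≤ ·)).map fun (i : ℕ+) =>
    (((i : ℕ) : Fq) • (pderiv i).toLinearMap) ^ (α i)).prod

/-- `f(∂) P`: substitute `p_i ↦ i·∂/∂p_i` in `f` and apply to `P`. -/
def DopF (f : LamF) (P : LamF) : LamF := ∑ α ∈ f.support, f.coeff α • monOpF α P

/-- Bound for the weighted degree of `P` (weight of `p_i` is `i`). -/
def wboundF (P : LamF) : ℕ := P.support.sup fun α => α.sum fun i k => (i : ℕ) * k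

/-- The level-one Fock space `W_i = Λ_F ⊗ F[ℤα]e^{iα/2}`, realized as `ℤ →₀ Λ_F`;
`Finsupp.single m P` represents `P·e^{mα}e^{iα/2}`. -/
abbrev W : Type := ℤ →₀ LamF

/-- The Drinfeld current component `X_n^+` on `W_i` (the parameter `i ∈ {0,1}` enters
through `z^∂ e^{mα}e^{iα/2} = z^{2m+i} e^{mα}e^{iα/2}`): the coefficient of `z^{−n−1}` in
`X⁺(z) = exp(∑((1+q^{2n})q^{−n}/n)a_{−n}zⁿ)·exp(−∑((1+q^{2n})q^{−n}/n)a_n z^{−n})·e^α z^∂`,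
i.e. `X_n^+(P·e^{mα}) = ∑_j HpF_{j−n−1−2m−i} · (ApF j)(∂) P · e^{(m+1)α}`
(only the finitely many `j ≤ wboundF P` contribute). -/
def Xp (i n : ℤ) (w : W) : W :=
  w.sum fun m P => Finsupp.single (m+1)
    (∑ j ∈ Finset.range (wboundF P + 1),
      HZp ((j : ℤ) - n - 1 - 2*m - i) * DopF (ApF j) P)

/-- The Drinfeld current component `X_n^-` on `W_i`: the coefficient of `z^{−n−1}` in
`X⁻(z) = exp(−∑((1+q^{2n})/n)a_{−n}zⁿ)·exp(∑((1+q^{2n})/n)a_n z^{−n})·e^{−α} z^{−∂}`,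
i.e. `X_n^-(P·e^{mα}) = ∑_j HmF_{j+2m+i−n−1} · h_j(∂) P · e^{(m−1)α}`
(here `(1+q^{2n})/n · a_n = ∂/∂p_n`, whose generating family is `h`). -/
def Xm (i n : ℤ) (w : W) : W :=
  w.sum fun m P => Finsupp.single (m-1)
    (∑ j ∈ Finset.range (wboundF P + 1),
      HZm ((j : ℤ) + 2*m + i - n - 1) * DopF (hhF j) P)

/-- The `q`-factorial `[r]! = ∏_{k=1}^r (q^k − q^{−k})/(q − q^{−1})`. -/
def qfact (r : ℕ) : Fq := ∏ k ∈ Finset.range r, (qq ^ (k+1) - (qq⁻¹) ^ (k+1)) / (qq - qq⁻¹)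

/-- The divided power `x^{(r)} = x^r / [r]!` of an operator on `W`. -/
def divpow (f : W → W) (r : ℕ) (w : W) : W := (qfact r)⁻¹ • (f^[r] w)

/-- Schur function of an integer tuple: `s_ρ = det (h_{ρ_i − i + j})`. -/
def schurF {l : ℕ} (ρ : Fin l → ℤ) : LamF :=
  (Matrix.of fun i j : Fin l => hZF (ρ i - (i.1 : ℤ) + (j.1 : ℤ))).det

/-- Dual Schur function of an integer tuple: `s_{ρ'} = det (e_{ρ_i − i + j})`. -/
def schurEF {l : ℕ} (ρ : Fin l → ℤ) : LamF :=
  (Matrix.of fun i j : Fin l => eZF (ρ i - (i.1 : ℤ) + (j.1 : ℤ))).det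

/-- `q^{±∂}`: `q^{ε∂}(P·e^{mα}e^{iα/2}) = q^{ε(2m+i)}·P·e^{mα}e^{iα/2}`. -/
def qd (i ε : ℤ) (w : W) : W := w.sum fun m P => Finsupp.single m (qq ^ (ε * (2*m + i)) • P)

/-- The Chevalley generator `e₁ = X₀⁺`. -/
def che1 (i : ℤ) : W → W := Xp i 0
/-- The Chevalley generator `f₁ = X₀⁻`. -/
def chf1 (i : ℤ) : W → W := Xm i 0
/-- The Chevalley generator `e₀ = X₁⁻ ∘ q^{−∂}`. -/
def che0 (i : ℤ) (w : W) : W := Xm i 1 (qd i (-1) w)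
/-- The Chevalley generator `f₀ = q^∂ ∘ X₋₁⁺`. -/
def chf0 (i : ℤ) (w : W) : W := qd i 1 (Xp i (-1) w)


/-! ### Substituting commuting operators into polynomials -/

/-- The operator `i·∂/∂p_i`. -/
def dltF (i : ℕ+) : Module.End Fq LamF := ((i : ℕ) : Fq) • (pderiv i).toLinearMap

lemma dltF_apply (i : ℕ+) (P : LamF) : dltF i P = ((i : ℕ) : Fq) • pderiv i P := rfl

lemma dltF_commute (i j : ℕ+) : dltF i * dltF j = dltF j * dltF i := by
  have h : ⁅(pderiv i : Derivation Fq LamF LamF), (pderiv j : Derivation Fq LamF LamF)⁆ = 0 := by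
    ext k
    rw [Derivation.commutator_apply]
    simp [pderiv_X, Pi.single_apply, apply_ite]
  refine LinearMap.ext fun P => ?_
  have h2 := congrArg (fun D : Derivation Fq LamF LamF => D P) h
  simp only [Derivation.commutator_apply, Derivation.zero_apply, sub_eq_zero] at h2
  simp only [Module.End.mul_apply, dltF_apply, map_smul]
  rw [h2, smul_comm]

open scoped IsMulCommutative in
/-- The commuting operators `dltF i` generate a commutative subalgebra, where polynomials can be
evaluated. -/
lemma exists_subst : ∃ φ : LamF →ₐ[Fq] Module.End Fq LamF, ∀ i, φ (X i) = dltF i := by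
  let s := Set.range dltF
  have hs : ∀ a ∈ s, ∀ b ∈ s, a * b = b * a := by
    rintro _ ⟨i, rfl⟩ _ ⟨j, rfl⟩
    exact dltF_commute i j
  have := Algebra.isMulCommutative_adjoin Fq hs
  let D : ℕ+ → Algebra.adjoin Fq s := fun i => ⟨dltF i, Algebra.subset_adjoin ⟨i, rfl⟩⟩
  refine ⟨(Algebra.adjoin Fq s).val.comp (aeval D), fun i => ?_⟩
  simp [D]

/-- The algebra homomorphism `f ↦ f(∂)` sending `p_i` to `i·∂/∂p_i`. -/
def substF : LamF →ₐ[Fq] Module.End Fq LamF := exists_subst.choose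

lemma substF_X (i : ℕ+) : substF (X i) = dltF i := exists_subst.choose_spec i

lemma substF_monomial (α : ℕ+ →₀ ℕ) (c : Fq) : substF (monomial α c) = c • monOpF α := by
  have h : (monomial α c : LamF)
      = c • ((α.support.sort (· ≤ ·)).map fun i : ℕ+ => (X i : LamF) ^ α i).prod := by
    rw [← Multiset.prod_coe, ← Multiset.map_coe, Finset.sort_eq, monomial_eq, smul_eq_C_mul]
    rfl
  rw [h, map_smul, map_list_prod, List.map_map]
  congr 3
  funext i
  simp [substF_X, dltF]

lemma DopF_eq (f P : LamF) : DopF f P = substF f P := by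
  conv_rhs => rw [f.as_sum, map_sum]
  simp only [DopF, substF_monomial, LinearMap.sum_apply, LinearMap.smul_apply]

/-! ### The creation and annihilation families, indexed by the integers -/

/-- `genFamF c`, extended by zero to negative indices. -/
def EF (c : ℕ → Fq) (k : ℤ) : LamF := if 0 ≤ k then genFamF c k.toNat else 0

/-- The annihilation operator `(genFamF d k)(∂)`, extended by zero to negative indices. -/
def AF (d : ℕ → Fq) (k : ℤ) : Module.End Fq LamF := substF (EF d k)

lemma EF_neg (c : ℕ → Fq) {k : ℤ} (hk : k < 0) : EF c k = 0 := if_neg (by omega)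

lemma EF_zero (c : ℕ → Fq) : EF c 0 = 1 := by simp [EF, genFamF]

lemma AF_neg (d : ℕ → Fq) {k : ℤ} (hk : k < 0) : AF d k = 0 := by simp [AF, EF_neg d hk]

lemma AF_zero (d : ℕ → Fq) : AF d 0 = 1 := by simp [AF, EF_zero]

lemma AF_commute (d : ℕ → Fq) (j k : ℤ) (P : LamF) : AF d j (AF d k P) = AF d k (AF d j P) := by
  simp only [AF, ← Module.End.mul_apply, ← map_mul, mul_comm]

/-- The recursion defining `genFamF`, with a summation range that may exceed the index:
the extra terms vanish. -/
lemma EF_rec (c : ℕ → Fq) (k : ℤ) (M : ℕ) (hM : k ≤ M) :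
    (k : Fq) • EF c k
      = ∑ i ∈ Finset.range M, c (i+1) • (X i.succPNat * EF c (k - 1 - i)) := by
  rcases lt_or_ge 0 k with hk | hk
  · obtain ⟨n, rfl⟩ : ∃ n : ℕ, k = n + 1 := ⟨(k-1).toNat, by omega⟩
    have hsub : Finset.range (n+1) ⊆ Finset.range M := by
      intro x; simp only [Finset.mem_range]; omega
    rw [← Finset.sum_subset hsub]
    · have h0 : EF c ((n : ℤ) + 1) = genFamF c (n+1) := by
        rw [EF, if_pos (by omega)]; congr 1
      have hne : ((n : Fq) + 1) ≠ 0 := by exact_mod_cast Nat.succ_ne_zero n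
      rw [h0, genFamF]
      push_cast
      rw [smul_inv_smul₀ hne]
      refine Finset.sum_congr rfl fun i hi => ?_
      have : i ≤ n := by simpa [Nat.lt_succ_iff] using hi
      rw [EF, if_pos (by omega)]
      change c (i+1) • (X i.succPNat * genFamF c (n - i)) = _
      congr 3
      omega
    · intro x _ hx
      have : n + 1 ≤ x := by simpa using hx
      rw [EF_neg c (by omega)]; simp
  · have h0 : (k : Fq) • EF c k = 0 := by
      rcases hk.lt_or_eq with h | h
      · rw [EF_neg c h, smul_zero]
      · simp [h]
    rw [h0, Finset.sum_eq_zero]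
    intro x _
    rw [EF_neg c (by omega)]; simp

lemma AF_rec (d : ℕ → Fq) (k : ℤ) (M : ℕ) (hM : k ≤ M) (P : LamF) :
    (k : Fq) • AF d k P
      = ∑ i ∈ Finset.range M, d (i+1) • dltF i.succPNat (AF d (k - 1 - i) P) := by
  have h := congrArg (fun f => substF f P) (EF_rec d k M hM)
  simpa [AF, substF_X, LinearMap.sum_apply] using h

lemma dltF_X_mul (i n : ℕ+) (P : LamF) :
    dltF i (X n * P) = X n * dltF i P + if i = n then ((n : ℕ) : Fq) • P else 0 := by
  rw [dltF_apply, dltF_apply, Derivation.leibniz, pderiv_X, smul_add, Pi.single_apply]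
  simp only [smul_eq_mul]
  split_ifs with h1 h2 h2
  · subst h1; simp
  · exact absurd h1.symm h2
  · exact absurd h2.symm h1
  · simp

lemma smul_combine {K V : Type*} [Field K] [AddCommGroup V] [Module K V] (x y z : K) (v : V) :
    x • y • v + y • (z - x) • v = z • y • v := by
  module

/-- The annihilation series `exp (∑ d_n u^n ∂/∂p_n)` is the translation `p_n ↦ p_n + d_n u^n`;
this is the coefficient of `u^k`. -/
lemma AF_X_mul (d : ℕ → Fq) (n : ℕ+) (k : ℤ) (P : LamF) :
    AF d k (X n * P) = X n * AF d k P + d n • AF d (k - n) P := by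
  have hn := n.pos
  rcases lt_or_ge k 0 with hk | hk
  · rw [AF_neg d hk, AF_neg d (by omega)]; simp
  obtain ⟨N, rfl⟩ := Int.eq_ofNat_of_zero_le hk
  induction N using Nat.strong_induction_on with
  | _ N ih =>
  rcases Nat.eq_zero_or_pos N with rfl | hN
  · rw [AF_neg d (k := ((0 : ℕ) : ℤ) - n) (by push_cast; omega)]
    simp [AF_zero]
  have ih' : ∀ i : ℕ, AF d (N - 1 - i) (X n * P)
      = X n * AF d (N - 1 - i) P + d n • AF d (N - 1 - i - n) P := by
    intro i
    by_cases h : i + 1 ≤ N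
    · have := ih (N - 1 - i) (by omega) (by omega)
      rwa [show ((N - 1 - i : ℕ) : ℤ) = (N : ℤ) - 1 - i by omega] at this
    · rw [AF_neg d (k := (N : ℤ) - 1 - i) (by omega),
        AF_neg d (k := (N : ℤ) - 1 - i - n) (by omega)]; simp
  have hne : ((N : ℤ) : Fq) ≠ 0 := by exact_mod_cast hN.ne'
  apply smul_right_injective LamF hne
  simp only
  have hsum : ∑ i ∈ Finset.range (N + n), d (i+1) •
      (if i.succPNat = n then ((n : ℕ) : Fq) • AF d ((N : ℤ) - 1 - i) P else 0)
      = ((n : ℕ) : Fq) • d n • AF d (N - n) P := by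
    rw [Finset.sum_eq_single (n.natPred)]
    · have h1 : n.natPred.succPNat = n := n.succPNat_natPred
      have h2 : (N : ℤ) - 1 - (n.natPred : ℤ) = N - n := by
        have := n.natPred_add_one; omega
      rw [if_pos h1, n.natPred_add_one, h2, smul_comm]
    · intro i _ hi
      rw [if_neg, smul_zero]
      rintro rfl
      exact hi rfl
    · intro h
      exfalso; apply h
      have := n.natPred_add_one
      simp only [Finset.mem_range]; omega
  have hr1 := AF_rec d N (N + n) (by push_cast; omega) P
  have hr2 := AF_rec d (N - n) (N + n) (by push_cast; omega) P
  rw [AF_rec d N (N + n) (by push_cast; omega)]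
  simp only [ih', map_add, map_smul, dltF_X_mul, smul_add, Finset.sum_add_distrib]
  rw [hsum, ← mul_smul_comm, hr1]
  have e3 : ∑ i ∈ Finset.range (N + n), d (i+1) • d n •
      dltF i.succPNat (AF d ((N : ℤ) - 1 - i - n) P)
      = d n • ((((N : ℤ) - n : ℤ) : Fq) • AF d (N - n) P) := by
    rw [hr2, Finset.smul_sum]
    refine Finset.sum_congr rfl fun i _ => ?_
    rw [smul_comm, show (N : ℤ) - 1 - i - n = N - n - 1 - i by ring]
  rw [e3, Finset.mul_sum]
  simp only [mul_smul_comm, add_assoc]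
  congr 1
  push_cast
  exact smul_combine _ _ _ _

/-! ### Local finiteness -/

lemma AF_one (d : ℕ → Fq) (k : ℤ) (hk : 0 < k) : AF d k (1 : LamF) = 0 := by
  obtain ⟨N, rfl⟩ := Int.eq_ofNat_of_zero_le hk.le
  have hne : ((N : ℤ) : Fq) ≠ 0 := by exact_mod_cast hk.ne'
  apply smul_right_injective LamF hne
  simp only
  rw [AF_rec d N N le_rfl, smul_zero]
  refine Finset.sum_eq_zero fun i _ => ?_
  rw [← substF_X, AF, ← Module.End.mul_apply, ← map_mul, mul_comm, map_mul, Module.End.mul_apply,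
    substF_X, dltF_apply]
  simp

lemma AF_X_pow_mul (d : ℕ → Fq) (n : ℕ+) (e N : ℕ) (Q : LamF)
    (hQ : ∀ j : ℤ, N < j → AF d j Q = 0) (j : ℤ) (hj : (N + n * e : ℕ) < j) :
    AF d j (X n ^ e * Q) = 0 := by
  induction e generalizing j with
  | zero => simpa using hQ j (by simpa using hj)
  | succ e ih =>
    have := n.pos
    push_cast [mul_add] at hj ih
    rw [pow_succ', mul_assoc, AF_X_mul, ih j (by omega), ih (j - n) (by omega)]
    simp

lemma AF_monomial (d : ℕ → Fq) (α : ℕ+ →₀ ℕ) (c : Fq) (j : ℤ)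
    (hj : ((α.sum fun i k => (i : ℕ) * k : ℕ) : ℤ) < j) : AF d j (monomial α c) = 0 := by
  have key : ∀ (α : ℕ+ →₀ ℕ) (N : ℕ) (Q : LamF), (∀ j : ℤ, N < j → AF d j Q = 0) →
      ∀ j : ℤ, ((N + α.sum fun i k => (i : ℕ) * k : ℕ) : ℤ) < j →
        AF d j (monomial α 1 * Q) = 0 := by
    intro α
    induction α using Finsupp.induction_linear with
    | zero => intro N Q hQ j hj; simpa using hQ j (by simpa using hj)
    | add f g hf hg =>
      intro N Q hQ j hj
      rw [Finsupp.sum_add_index' (by simp) (by intros; ring)] at hj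
      rw [show (monomial (f + g) 1 : LamF) = monomial f 1 * monomial g 1 by
        rw [monomial_mul, one_mul], mul_assoc]
      exact hf _ _ (hg N Q hQ) j (by push_cast at hj ⊢; omega)
    | single n e =>
      intro N Q hQ j hj
      rw [Finsupp.sum_single_index (by simp)] at hj
      rw [← X_pow_eq_monomial]
      exact AF_X_pow_mul d n e N Q hQ j hj
  have h := key α 0 1 (fun j hj => AF_one d j (by simpa using hj)) j (by simpa using hj)
  have e : (monomial α c : LamF) = c • (monomial α 1 * 1) := by
    rw [mul_one, smul_monomial, smul_eq_mul, mul_one]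
  rw [e, map_smul, h, smul_zero]

/-- The truncation `j ≤ wboundF P` in the definition of the currents loses no terms. -/
lemma AF_wbound (d : ℕ → Fq) (P : LamF) (j : ℤ) (hj : (wboundF P : ℤ) < j) : AF d j P = 0 := by
  conv_lhs => rw [P.as_sum, map_sum]
  refine Finset.sum_eq_zero fun α hα => AF_monomial d α _ j (lt_of_le_of_lt ?_ hj)
  exact_mod_cast Finset.le_sup (f := fun α : ℕ+ →₀ ℕ => α.sum fun i k => (i : ℕ) * k) hα

/-! ### Normal ordering -/

/-- With `B i = (uw)^i` this is the expansion of `Q · ∑ (1 + sⁿ)(uw)ⁿ = −w·∂Q/∂w` for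
`Q = (1 − uw)(1 − s·uw)`, truncated after `M` terms. -/
lemma telescope {K V : Type*} [Field K] [AddCommGroup V] [Module K V] (s : K) (B : ℕ → V)
    (M : ℕ) :
    ∑ i ∈ Finset.range M, (1 + s ^ (i+1)) • (B (i+1) - (1 + s) • B (i+2) + s • B (i+3))
      = (1 + s) • B 1 - (2 * s) • B 2 - (1 + s ^ (M+1)) • B (M+1)
        + (s * (1 + s ^ M)) • B (M+2) := by
  induction M with
  | zero => simp only [Finset.range_zero, Finset.sum_empty]; module
  | succ M ih =>
    rw [Finset.sum_range_succ, ih]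
    module

lemma smul_expand {K V : Type*} [Field K] [AddCommGroup V] [Module K V] (x s e : K)
    (p₀ p₁ p₂ b : V) :
    x • (p₀ - (1 + s) • p₁ + s • p₂) + -(1 + e) • b
      = x • p₀ - (1 + s) • x • p₁ + s • x • p₂ - (1 + e) • b := by
  module

lemma smul_collect {K V : Type*} [Field K] [AddCommGroup V] [Module K V] (x s : K)
    (b₀ b₁ b₂ : V) :
    x • b₀ - (1 + s) • (x - 1) • b₁ + s • (x - 2) • b₂ - ((1 + s) • b₁ - (2 * s) • b₂)
      = x • (b₀ - (1 + s) • b₁ + s • b₂) := by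
  module

/-- The normal-ordering relation: if `c_n d_n = −(1 + sⁿ)`, the annihilation series in `u` and the
creation series in `w` commute up to the factor `(1 − uw)(1 − s·uw)`. -/
lemma AF_EF (c d : ℕ → Fq) (s : Fq) (hcd : ∀ n, c n * d n = -(1 + s ^ n)) (j k : ℤ) (P : LamF) :
    AF d j (EF c k * P) = EF c k * AF d j P - (1 + s) • (EF c (k-1) * AF d (j-1) P)
      + s • (EF c (k-2) * AF d (j-2) P) := by
  rcases lt_or_ge k 0 with hk | hk
  · rw [EF_neg c hk, EF_neg c (k := k-1) (by omega), EF_neg c (k := k-2) (by omega)]; simp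
  obtain ⟨N, rfl⟩ := Int.eq_ofNat_of_zero_le hk
  induction N using Nat.strong_induction_on generalizing j with
  | _ N ih =>
  rcases Nat.eq_zero_or_pos N with rfl | hN
  · rw [EF_neg c (k := ((0:ℕ):ℤ) - 1) (by simp), EF_neg c (k := ((0:ℕ):ℤ) - 2) (by simp)]
    simp [EF_zero]
  have ih' : ∀ (j : ℤ) (i : ℕ), AF d j (EF c (N - 1 - i) * P)
      = EF c (N - 1 - i) * AF d j P - (1 + s) • (EF c (N - 1 - i - 1) * AF d (j-1) P)
      + s • (EF c (N - 1 - i - 2) * AF d (j-2) P) := by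
    intro j i
    by_cases h : i + 1 ≤ N
    · have := ih (N - 1 - i) (by omega) j (by omega)
      rwa [show ((N - 1 - i : ℕ) : ℤ) = (N : ℤ) - 1 - i by omega] at this
    · rw [EF_neg c (k := (N : ℤ) - 1 - i) (by omega),
        EF_neg c (k := (N : ℤ) - 1 - i - 1) (by omega),
        EF_neg c (k := (N : ℤ) - 1 - i - 2) (by omega)]; simp
  have hne : ((N : ℤ) : Fq) ≠ 0 := by exact_mod_cast hN.ne'
  apply smul_right_injective LamF hne
  simp only
  -- `B i` collects the normally ordered product with both indices lowered by `i`.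
  let B : ℕ → LamF := fun i => EF c (N - i) * AF d (j - i) P
  have hB : ∀ i, N < i → B i = 0 := fun i hi => by
    simp only [B]; rw [EF_neg c (by omega), zero_mul]
  have tel := telescope s B N
  rw [hB (N+1) (by omega), hB (N+2) (by omega), smul_zero, smul_zero, sub_zero, add_zero] at tel
  have r0 := EF_rec c N N le_rfl
  have r1 := EF_rec c (N-1) N (by omega)
  have r2 := EF_rec c (N-2) N (by omega)
  have hterm : ∀ i : ℕ, c (i+1) • AF d j (X i.succPNat * (EF c (N - 1 - i) * P))
      = (c (i+1) • (X i.succPNat * EF c (N - 1 - i))) * AF d j P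
        - (1 + s) • ((c (i+1) • (X i.succPNat * EF c (N - 1 - 1 - i))) * AF d (j-1) P)
        + s • ((c (i+1) • (X i.succPNat * EF c (N - 2 - 1 - i))) * AF d (j-2) P)
        - (1 + s ^ (i+1)) • (B (i+1) - (1 + s) • B (i+2) + s • B (i+3)) := by
    intro i
    rw [AF_X_mul, ih', ih']
    simp only [B, Nat.succPNat_coe, Nat.succ_eq_add_one]
    push_cast
    rw [smul_add, smul_smul, hcd,
      show (N : ℤ) - 1 - i - 1 = N - 1 - 1 - i by ring,
      show (N : ℤ) - 1 - i - 2 = N - 2 - 1 - i by ring,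
      show (N : ℤ) - 1 - i = N - (i + 1) by ring,
      show (N : ℤ) - (i + 2) = N - 1 - 1 - i by ring,
      show (N : ℤ) - (i + 3) = N - 2 - 1 - i by ring,
      show j - ((i : ℤ) + 1) - 1 = j - (i + 2) by ring,
      show j - ((i : ℤ) + 1) - 2 = j - (i + 3) by ring]
    simp only [mul_add, mul_sub, smul_mul_assoc, mul_smul_comm, mul_assoc]
    exact smul_expand _ _ _ _ _ _ _
  have hL : ((N : ℤ) : Fq) • AF d j (EF c N * P) = ∑ i ∈ Finset.range N,
      c (i+1) • AF d j (X i.succPNat * (EF c (N - 1 - i) * P)) := by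
    rw [← map_smul, ← smul_mul_assoc, r0, Finset.sum_mul, map_sum]
    simp only [smul_mul_assoc, map_smul, mul_assoc]
  rw [hL]
  rw [Finset.sum_congr rfl fun i _ => hterm i, Finset.sum_sub_distrib, Finset.sum_add_distrib,
    Finset.sum_sub_distrib, tel, ← Finset.smul_sum, ← Finset.smul_sum, ← Finset.sum_mul,
    ← Finset.sum_mul, ← Finset.sum_mul, ← r0, ← r1, ← r2]
  simp only [B, smul_mul_assoc]
  push_cast
  exact smul_collect _ _ _ _ _

/-! ### The components of the vertex operators -/

/-- The coefficient `∑_j E_{j−a} A_j` of the normally ordered product of the creation and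
annihilation series. -/
def VF (c d : ℕ → Fq) (a : ℤ) (P : LamF) : LamF :=
  ∑ j ∈ Finset.range (wboundF P + 1), EF c (j - a) * AF d j P

lemma VF_eq (c d : ℕ → Fq) (a : ℤ) (P : LamF) (M : ℕ) (hM : ∀ j : ℤ, M ≤ j → AF d j P = 0) :
    VF c d a P = ∑ j ∈ Finset.range M, EF c (j - a) * AF d j P := by
  have h1 : ∀ (L K : ℕ), (∀ j : ℤ, L ≤ j → AF d j P = 0) → L ≤ K →
      ∑ j ∈ Finset.range L, EF c (j - a) * AF d j P
        = ∑ j ∈ Finset.range K, EF c (j - a) * AF d j P := by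
    intro L K hL hLK
    refine Finset.sum_subset (Finset.range_mono hLK) fun x _ hx => ?_
    rw [hL x (by simpa using hx), mul_zero]
  rw [VF, h1 _ (max (wboundF P + 1) M) (fun j hj => AF_wbound d P j (by push_cast at hj; omega))
    (le_max_left _ _), h1 M _ hM (le_max_right _ _)]

lemma VF_add (c d : ℕ → Fq) (a : ℤ) (P Q : LamF) :
    VF c d a (P + Q) = VF c d a P + VF c d a Q := by
  have hP : ∀ j : ℤ, ((wboundF P + wboundF Q + 1 : ℕ) : ℤ) ≤ j → AF d j P = 0 :=
    fun j hj => AF_wbound d P j (by push_cast at hj; omega)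
  have hQ : ∀ j : ℤ, ((wboundF P + wboundF Q + 1 : ℕ) : ℤ) ≤ j → AF d j Q = 0 :=
    fun j hj => AF_wbound d Q j (by push_cast at hj; omega)
  rw [VF_eq c d a _ _ hP, VF_eq c d a _ _ hQ, VF_eq c d a (P + Q) (wboundF P + wboundF Q + 1)
    (fun j hj => by rw [map_add, hP j hj, hQ j hj, add_zero]), ← Finset.sum_add_distrib]
  simp only [map_add, mul_add]

lemma VF_zero (c d : ℕ → Fq) (a : ℤ) : VF c d a 0 = 0 := by simp [VF]

lemma VF_sum (c d : ℕ → Fq) (a : ℤ) (S : Finset ℕ) (f : ℕ → LamF) :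
    VF c d a (∑ l ∈ S, f l) = ∑ l ∈ S, VF c d a (f l) :=
  map_sum (AddMonoidHom.mk' (VF c d a) (VF_add c d a)) f S

/-- The truncated coefficient of the normally ordered product of two vertex operators. -/
def NF (c d : ℕ → Fq) (M : ℕ) (P : LamF) (a b : ℤ) : LamF :=
  ∑ l ∈ Finset.range M, ∑ j ∈ Finset.range M,
    EF c (j - a) * (EF c (l - b) * AF d j (AF d l P))

/-- Normally ordered products are symmetric, since creation operators commute with each other and
so do annihilation operators. -/
lemma NF_symm (c d : ℕ → Fq) (M : ℕ) (P : LamF) (a b : ℤ) : NF c d M P a b = NF c d M P b a := by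
  rw [NF, NF, Finset.sum_comm]
  refine Finset.sum_congr rfl fun l _ => Finset.sum_congr rfl fun j _ => ?_
  rw [AF_commute, mul_left_comm]

lemma sum_shift (f : ℤ → LamF) (M : ℕ) (h0 : f (-1) = 0) (h1 : f (M - 1) = 0) :
    ∑ j ∈ Finset.range M, f (j - 1) = ∑ j ∈ Finset.range M, f j := by
  cases M with
  | zero => simp
  | succ M =>
    rw [Finset.sum_range_succ', Finset.sum_range_succ]
    push_cast at h1
    simp only [add_sub_cancel_right] at h1
    simp [h0, h1]

/-- The product of two vertex operators is `(1 − uw)(1 − s·uw)` times the normally ordered one.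
The truncation at `wboundF P + 3` leaves room for the two index shifts. -/
lemma VF_VF (c d : ℕ → Fq) (s : Fq) (hcd : ∀ n, c n * d n = -(1 + s ^ n)) (P : LamF) (a b : ℤ) :
    VF c d a (VF c d b P) = NF c d (wboundF P + 3) P a b
      - (1 + s) • NF c d (wboundF P + 3) P (a - 1) (b + 1)
      + s • NF c d (wboundF P + 3) P (a - 2) (b + 2) := by
  set M := wboundF P + 3 with hMdef
  have hP : ∀ j : ℤ, (M : ℤ) - 2 ≤ j → AF d j P = 0 := fun j hj =>
    AF_wbound d P j (by push_cast [hMdef] at hj; omega)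
  have hPP : ∀ (j l : ℤ), (M : ℤ) - 2 ≤ j → AF d j (AF d l P) = 0 := fun j l hj => by
    rw [AF_commute, hP j hj, map_zero]
  rw [VF_eq c d b P M (fun j hj => hP j (by omega)), VF_sum]
  simp only [NF, Finset.smul_sum]
  rw [← Finset.sum_sub_distrib, ← Finset.sum_add_distrib]
  refine Finset.sum_congr rfl fun l _ => ?_
  rw [VF_eq c d a _ M (fun j hj => by
    rw [AF_EF c d s hcd, hPP j l (by omega), hPP (j-1) l (by omega), hPP (j-2) l (by omega)]
    simp)]
  simp only [AF_EF c d s hcd, mul_add, mul_sub, mul_smul_comm]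
  rw [Finset.sum_add_distrib, Finset.sum_sub_distrib]
  have s1 : ∑ j ∈ Finset.range M,
      EF c (j - a) * (EF c ((l : ℤ) - b - 1) * AF d ((j : ℤ) - 1) (AF d l P))
      = ∑ j ∈ Finset.range M,
        EF c (j - (a - 1)) * (EF c ((l : ℤ) - (b + 1)) * AF d j (AF d l P)) := by
    rw [← sum_shift (fun j => EF c (j - (a - 1)) * (EF c ((l : ℤ) - (b + 1)) * AF d j (AF d l P)))]
    · refine Finset.sum_congr rfl fun j _ => ?_
      rw [show (j : ℤ) - 1 - (a - 1) = j - a by ring, show (l : ℤ) - b - 1 = l - (b + 1) by ring]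
    · rw [AF_neg d (by norm_num)]; simp
    · rw [hPP _ _ (by omega)]; simp
  have s2 : ∑ j ∈ Finset.range M,
      EF c (j - a) * (EF c ((l : ℤ) - b - 2) * AF d ((j : ℤ) - 2) (AF d l P))
      = ∑ j ∈ Finset.range M,
        EF c (j - (a - 2)) * (EF c ((l : ℤ) - (b + 2)) * AF d j (AF d l P)) := by
    rw [← sum_shift (fun j => EF c (j - (a - 2)) * (EF c ((l : ℤ) - (b + 2)) * AF d j (AF d l P))),
      ← sum_shift (fun j => EF c (j - 1 - (a - 2)) *
        (EF c ((l : ℤ) - (b + 2)) * AF d (j - 1) (AF d l P)))]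
    · refine Finset.sum_congr rfl fun j _ => ?_
      rw [show (j : ℤ) - 1 - 1 - (a - 2) = j - a by ring,
        show (l : ℤ) - b - 2 = l - (b + 2) by ring, show (j : ℤ) - 1 - 1 = j - 2 by ring]
    · rw [AF_neg d (by norm_num)]; simp
    · rw [hPP _ _ (by omega)]; simp
    · rw [AF_neg d (by norm_num)]; simp
    · rw [hPP _ _ (by omega)]; simp
  simp only [← Finset.smul_sum]
  rw [s1, s2]

/-- The quadratic relation on a single lattice component, with `t = s⁻¹`. -/
lemma VF_quadratic (c d : ℕ → Fq) (s t : Fq) (hst : t * s = 1)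
    (hcd : ∀ n, c n * d n = -(1 + s ^ n)) (P : LamF) (a b : ℤ) :
    VF c d (a + 2) (VF c d b P) - t • VF c d (b + 2) (VF c d a P)
      = t • VF c d (a + 1) (VF c d (b + 1) P) - VF c d (b + 3) (VF c d (a - 1) P) := by
  simp only [VF_VF c d s hcd]
  set N := NF c d (wboundF P + 3) P
  have hsym : ∀ x y, N x y = N y x := NF_symm c d _ P
  rw [show a + 2 - 1 = a + 1 by ring, show a + 2 - 2 = a by ring,
    show b + 2 - 1 = b + 1 by ring, show b + 2 - 2 = b by ring,
    show a + 1 - 1 = a by ring, show a + 1 - 2 = a - 1 by ring,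
    show b + 1 + 1 = b + 2 by ring, show b + 1 + 2 = b + 3 by ring,
    show b + 3 - 1 = b + 2 by ring, show b + 3 - 2 = b + 1 by ring,
    show a - 1 + 1 = a by ring, show a - 1 + 2 = a + 1 by ring,
    hsym (b + 2) a, hsym (b + 1) (a + 1), hsym b (a + 2), hsym (b + 3) (a - 1)]
  simp only [smul_add, smul_sub, smul_smul, hst, add_smul, one_smul]
  abel

/-- The operator on `W` acting on the component `m` by `VF` with index `r m`, and shifting
that component by `ε`. -/
def YF (c d : ℕ → Fq) (ε : ℤ) (r : ℤ → ℤ) (w : W) : W :=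
  w.sum fun m P => Finsupp.single (m + ε) (VF c d (r m) P)

lemma YF_single (c d : ℕ → Fq) (ε : ℤ) (r : ℤ → ℤ) (m : ℤ) (P : LamF) :
    YF c d ε r (Finsupp.single m P) = Finsupp.single (m + ε) (VF c d (r m) P) :=
  Finsupp.sum_single_index (by rw [VF_zero, Finsupp.single_zero])

lemma YF_add (c d : ℕ → Fq) (ε : ℤ) (r : ℤ → ℤ) (v w : W) :
    YF c d ε r (v + w) = YF c d ε r v + YF c d ε r w :=
  Finsupp.sum_add_index' (fun m => by rw [VF_zero, Finsupp.single_zero])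
    (fun m P Q => by rw [VF_add, Finsupp.single_add])

/-- `r n k` is the index of the component `n` of the current on the lattice component `k`: moving
along the lattice by `ε` raises it by `2`. -/
lemma YF_quadratic (c d : ℕ → Fq) (s t : Fq) (hst : t * s = 1)
    (hcd : ∀ n, c n * d n = -(1 + s ^ n)) (ε : ℤ) (r : ℤ → ℤ → ℤ)
    (hr : ∀ n k, r n (k + ε) = r n k + 2) (hr1 : ∀ n k l, r (n + l) k = r n k + l)
    (m n : ℤ) (w : W) :
    YF c d ε (r m) (YF c d ε (r n) w) - t • YF c d ε (r n) (YF c d ε (r m) w)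
      = t • YF c d ε (r (m - 1)) (YF c d ε (r (n + 1)) w)
        - YF c d ε (r (n + 1)) (YF c d ε (r (m - 1)) w) := by
  induction w using Finsupp.induction_linear with
  | zero => simp [YF]
  | add v w hv hw =>
    simp only [YF_add, smul_add, add_sub_add_comm, hv, hw]
  | single k P =>
    simp only [YF_single, Finsupp.smul_single, ← Finsupp.single_sub, hr]
    congr 1
    rw [hr1 n k 1, sub_eq_add_neg m, hr1 m k (-1)]
    have := VF_quadratic c d s t hst hcd P (r m k) (r n k)
    rw [show r m k + -1 + 2 = r m k + 1 by ring, show r n k + 1 + 2 = r n k + 3 by ring,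
      ← sub_eq_add_neg (r m k) 1]
    exact this

lemma Xp_eq (i n : ℤ) : Xp i n = YF (fun n => (1 + qq ^ (2*n)) * (qq⁻¹) ^ n)
    (fun n => -((qq⁻¹) ^ n)) 1 (fun m => n + 1 + 2 * m + i) := by
  funext w
  unfold Xp YF VF
  refine congrArg (Finsupp.sum w) (funext fun m => funext fun P => ?_)
  congr 1
  refine Finset.sum_congr rfl fun j _ => ?_
  congr 1
  · change EF _ _ = EF _ _
    congr 1; ring
  · rw [DopF_eq, AF, EF, if_pos (by positivity)]; rfl

lemma Xm_eq (i n : ℤ) : Xm i n = YF (fun n => -(1 + qq ^ (2*n)))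
    (fun _ => 1) (-1) (fun m => n + 1 - 2 * m - i) := by
  funext w
  unfold Xm YF VF
  refine congrArg (Finsupp.sum w) (funext fun m => funext fun P => ?_)
  congr 1
  refine Finset.sum_congr rfl fun j _ => ?_
  congr 1
  · change EF _ _ = EF _ _
    congr 1; ring
  · rw [DopF_eq, AF, EF, if_pos (by positivity)]; rfl

/-- the components of the Drinfeld currents satisfy the quadratic
(Serre-type) relations: for all `m, n ∈ ℤ` and both choices of sign, as `F`-linear
endomorphisms of `W_i` (`i ∈ {0,1}`), stated pointwise:
`X_m^± X_n^± − q^{±2} X_n^± X_m^± = q^{±2} X_{m−1}^± X_{n+1}^± − X_{n+1}^± X_{m−1}^±`. -/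
theorem drinfeld_serre_relations (i : ℤ) (hi : i = 0 ∨ i = 1) (m n : ℤ) (w : W) :
    (Xp i m (Xp i n w) - qq ^ 2 • Xp i n (Xp i m w)
      = qq ^ 2 • Xp i (m-1) (Xp i (n+1) w) - Xp i (n+1) (Xp i (m-1) w)) ∧
    (Xm i m (Xm i n w) - (qq⁻¹) ^ 2 • Xm i n (Xm i m w)
      = (qq⁻¹) ^ 2 • Xm i (m-1) (Xm i (n+1) w) - Xm i (n+1) (Xm i (m-1) w)) := by
  have hq : qq ≠ 0 := RatFunc.X_ne_zero
  refine ⟨?_, ?_⟩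
  · simp only [Xp_eq]
    refine YF_quadratic _ _ ((qq⁻¹) ^ 2) (qq ^ 2) (by field_simp) (fun n => ?_) 1
      (fun n m => n + 1 + 2 * m + i) (fun n k => by ring) (fun n k l => by ring) m n w
    have h : (qq ^ n) ≠ 0 := pow_ne_zero n hq
    simp only [← pow_mul, mul_comm 2 n, inv_pow]
    field_simp
    ring
  · simp only [Xm_eq]
    refine YF_quadratic _ _ (qq ^ 2) ((qq⁻¹) ^ 2) (by field_simp) (fun n => ?_) (-1)
      (fun n m => n + 1 - 2 * m - i) (fun n k => by ring) (fun n k l => by ring) m n w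
    rw [mul_one, pow_mul]
end
end
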